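/- Let p : Fin n → EuclideanSpace ℝ (Fin d) be an injective family such that every p i is an extreme point of P := convexHull ℝ (Set.range p), and let ι : Fin n → Fin n be an involution with p (ι i) = − p i for all i (so P is centrally symmetric). Let q : Fin n → EuclideanSpace ℝ (Fin e) satisfy q (ι i) = − q i for all i. If (1) ‖q i − q j‖ ≤ ‖p i − p j‖ for every edge (i,j) of P, and (2) ‖p i‖ ≤ ‖q i‖ for all i, then ‖q i − q j‖ = ‖p i − p j‖ for all i, j, and ‖q i‖ = ‖p i‖ for all i (i.e. q is congruent to the skeleton of P via an orthogonal transformation). -/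

import Mathlib

/-- For `i ≠ j`, the pair `(i,j)` is an edge of the polytope `convexHull ℝ (Set.range p)`
if the closed segment between `p i` and `p j` is an extreme subset of it. -/
def IsEdge {n d : ℕ} (p : Fin n → EuclideanSpace ℝ (Fin d)) (i j : Fin n) : Prop :=
  i ≠ j ∧ IsExtreme ℝ (convexHull ℝ (Set.range p)) (segment ℝ (p i) (p j))

/-!
As `β → ∞`, the log-sum-exp `lse β` of the numbers `⟪p i, x⟫` tends to the support function `h` of
`P`. Since `lse β` is convex, the Prékopa–Leindler inequality bounds the second derivative in `t` of
`∫ exp (-lse β (⟪p i, x⟫ + t * ω i)) dx` at `t = 0` by the square of the first, which vanishes for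
odd `ω`. If `ω` is a coordinate of `p`, the integral does not depend on `t` at all. Summing over the
coordinates of `q` and comparing with those of `p`, only the edges of `P` and the norms survive in
the limit `β → ∞`, and `∑ i, μ (N i) * (‖q i‖ ^ 2 - ‖p i‖ ^ 2) ≤ 0` for the measure
`μ = exp (-h x) dx` and the open normal cones `N i` of `P`. Hence `‖q i‖ = ‖p i‖`.

In this equality case the second derivative tends to `0` for each coordinate `ω` of `q`, and the
same inequality with the additional log-concave factor `sigmoid (⟪θ, x⟫ - s)` gives a differential
equation in `s` for the integrals of the function `g` with value `ω i` on `N i` against such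
factors. Its solution shows `μ E * ∫ g * exp ⟪θ, x⟫ ∂μ = ∫ g * ⟪θ, x⟫ ∂μ * ∫ exp ⟪θ, x⟫ ∂μ`. As `θ`
tends to `p i`, the exponential weight concentrates on `N i`, so that
`μ E * ω i = ⟪p i, ∫ g x • x ∂μ⟫`.

Therefore `q i = T (p i)` with `T` linear. The linear functional `⟪p i, y⟫ - ⟪T (p i), T y⟫`
vanishes at `y = p i` and is nonpositive at the neighbours of `p i`, hence on all of `P`, and by
symmetry it vanishes.
-/

open MeasureTheory Set Filter Topology
open scoped ENNReal RealInnerProductSpace Pointwise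

namespace PolytopeRigidity

section PrekopaLeindler

theorem volume_add_volume_le_of_isCompact {A B C : Set ℝ} (hA : IsCompact A) (hB : IsCompact B)
    (hA0 : A.Nonempty) (hB0 : B.Nonempty) (h : ∀ x ∈ A, ∀ y ∈ B, midpoint ℝ x y ∈ C) :
    volume A + volume B ≤ 2 * volume C := by
  obtain ⟨a, ha, ha_max⟩ := hA.exists_isGreatest hA0
  obtain ⟨b, hb, hb_min⟩ := hB.exists_isLeast hB0
  have hA' : volume ((fun x => x + b) '' A) = volume A := by simp
  have hB' : volume ((fun x => a + x) '' B) = volume B := by simp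
  have hdisj : AEDisjoint volume ((fun x => x + b) '' A) ((fun x => a + x) '' B) := by
    refine measure_mono_null (t := {a + b}) ?_ (by simp)
    rintro _ ⟨⟨x, hx, rfl⟩, ⟨y, hy, hxy⟩⟩
    have hxa := ha_max hx
    have hby := hb_min hy
    rw [mem_singleton_iff]
    linarith
  have hC : (2 : ℝ≥0∞) * volume C = volume ((2 : ℝ) • C) := by simp [Measure.addHaar_smul]
  rw [← hA', ← hB', ← measure_union₀ (hB.image (by fun_prop)).measurableSet.nullMeasurableSet hdisj,
    hC]
  refine measure_mono ?_
  rintro _ (⟨x, hx, rfl⟩ | ⟨x, hx, rfl⟩)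
  · exact ⟨_, h x hx b hb, by simp [midpoint_eq_smul_add]⟩
  · exact ⟨_, h a ha x hx, by simp [midpoint_eq_smul_add]⟩

theorem add_measure_le_of_forall_isCompact {X : Type*} [TopologicalSpace X] [MeasurableSpace X]
    {μ : Measure X} [μ.InnerRegularCompactLTTop] [SigmaFinite μ] {B : Set X}
    (hB : MeasurableSet B) (hB0 : B.Nonempty) {x y : ℝ≥0∞}
    (hK : ∀ K ⊆ B, IsCompact K → K.Nonempty → x + μ K ≤ y) : x + μ B ≤ y := by
  obtain ⟨b, hb⟩ := hB0
  have hbK := hK {b} (by simpa) isCompact_singleton (by simp)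
  by_cases hx : x = ∞
  · simpa [hx] using hbK
  have hBy : μ B ≤ y - x := by
    refine le_of_forall_lt fun r hr => ?_
    obtain ⟨K, hKB, hK_compact, hrK⟩ := hB.exists_lt_isCompact hr
    calc r < μ K := hrK
      _ ≤ μ (insert b K) := measure_mono (subset_insert _ _)
      _ ≤ y - x := ENNReal.le_sub_of_add_le_left hx
        (hK _ (insert_subset hb hKB) (hK_compact.insert b) ⟨b, by simp⟩)
  calc x + μ B ≤ x + (y - x) := by gcongr
    _ = y := add_tsub_cancel_of_le (le_self_add.trans hbK)

theorem volume_add_volume_le {A B C : Set ℝ} (hA : MeasurableSet A) (hB : MeasurableSet B)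
    (hA0 : A.Nonempty) (hB0 : B.Nonempty) (h : ∀ x ∈ A, ∀ y ∈ B, midpoint ℝ x y ∈ C) :
    volume A + volume B ≤ 2 * volume C := by
  refine add_measure_le_of_forall_isCompact hB hB0 fun K hKB hK hK0 => ?_
  rw [add_comm]
  refine add_measure_le_of_forall_isCompact hA hA0 fun L hLA hL hL0 => ?_
  rw [add_comm]
  exact volume_add_volume_le_of_isCompact hL hK hL0 hK0 fun x hx y hy => h x (hLA hx) y (hKB hy)

theorem measurable_volume_superlevel (F : ℝ → ℝ) : Measurable fun t => volume {x | t < F x} :=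
  Antitone.measurable fun _ _ hst => measure_mono fun _ hx => lt_of_le_of_lt hst hx

theorem lintegral_add_lintegral_le {F G H : ℝ → ℝ} (hF : Measurable F) (hG : Measurable G)
    (hH : Measurable H) (hF0 : 0 ≤ F) (hG0 : 0 ≤ G) (hH0 : 0 ≤ H)
    (hF1 : IsLUB (range F) 1) (hG1 : IsLUB (range G) 1)
    (h : ∀ x y, F x * G y ≤ H (midpoint ℝ x y) ^ 2) :
    (∫⁻ x, ENNReal.ofReal (F x)) + (∫⁻ x, ENNReal.ofReal (G x))
      ≤ 2 * ∫⁻ x, ENNReal.ofReal (H x) := by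
  rw [lintegral_eq_lintegral_meas_lt _ (.of_forall hF0) hF.aemeasurable,
    lintegral_eq_lintegral_meas_lt _ (.of_forall hG0) hG.aemeasurable,
    lintegral_eq_lintegral_meas_lt _ (.of_forall hH0) hH.aemeasurable,
    ← lintegral_add_left (measurable_volume_superlevel F),
    ← lintegral_const_mul _ (measurable_volume_superlevel H)]
  refine setLIntegral_mono ((measurable_volume_superlevel H).const_mul _) fun t (ht : 0 < t) => ?_
  rcases lt_or_ge t 1 with ht1 | ht1
  · have nonempty_superlevel {F : ℝ → ℝ} (hF1 : IsLUB (range F) 1) : {x | t < F x}.Nonempty := by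
      obtain ⟨_, ⟨x, rfl⟩, hx⟩ := (lt_isLUB_iff hF1).1 ht1
      exact ⟨x, hx⟩
    refine volume_add_volume_le (measurableSet_lt measurable_const hF)
      (measurableSet_lt measurable_const hG) (nonempty_superlevel hF1) (nonempty_superlevel hG1)
      fun x (hx : t < F x) y (hy : t < G y) => lt_of_pow_lt_pow_left₀ 2 (hH0 _) ?_
    nlinarith [h x y]
  · have superlevel_eq_empty {F : ℝ → ℝ} (hF1 : IsLUB (range F) 1) : {x | t < F x} = ∅ :=
      eq_empty_of_forall_notMem fun x (hx : t < F x) => (hx.trans_le (hF1.1 ⟨x, rfl⟩)).not_ge ht1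
    simp [superlevel_eq_empty hF1, superlevel_eq_empty hG1]

/-- The midpoint case of the Prékopa–Leindler inequality, as a property of a measure. -/
def IsPrekopaLeindler {E : Type*} [AddCommGroup E] [Module ℝ E] [MeasurableSpace E]
    (μ : Measure E) : Prop :=
  ∀ ⦃f g h : E → ℝ≥0∞⦄, Measurable f → Measurable g → Measurable h →
    (∀ x y, f x * g y ≤ h (midpoint ℝ x y) ^ 2) → (∫⁻ x, f x ∂μ) * ∫⁻ x, g x ∂μ ≤ (∫⁻ x, h x ∂μ) ^ 2

theorem isLUB_range_div {X : Type*} {F : X → ℝ} {a : ℝ} (ha : 0 < a) (hF : IsLUB (range F) a) :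
    IsLUB (range fun x => F x / a) 1 := by
  refine ⟨?_, fun c hc => ?_⟩
  · rintro _ ⟨x, rfl⟩
    exact (div_le_one ha).2 (hF.1 ⟨x, rfl⟩)
  · refine le_of_mul_le_mul_right ?_ ha
    rw [one_mul]
    refine hF.2 ?_
    rintro _ ⟨x, rfl⟩
    exact (div_le_iff₀ ha).1 (hc ⟨x, rfl⟩)

theorem lintegral_ofReal_div {X : Type*} [MeasurableSpace X] {μ : Measure X} {F : X → ℝ}
    (hF : Measurable F) {a : ℝ} (ha : 0 < a) :
    ∫⁻ x, ENNReal.ofReal (F x / a) ∂μ = (∫⁻ x, ENNReal.ofReal (F x) ∂μ) / ENNReal.ofReal a := by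
  simp_rw [ENNReal.ofReal_div_of_pos ha, ENNReal.div_eq_inv_mul]
  exact lintegral_const_mul _ (by fun_prop)

theorem mul_le_sq_of_div_add_div_le {x y z : ℝ≥0∞} {a b : ℝ} (ha : 0 < a) (hb : 0 < b)
    (h : x / ENNReal.ofReal a + y / ENNReal.ofReal b ≤ 2 * (z / ENNReal.ofReal √(a * b))) :
    x * y ≤ z ^ 2 := by
  rcases eq_or_ne z ∞ with rfl | hz
  · simp
  have hright : 2 * (z / ENNReal.ofReal √(a * b)) ≠ ∞ :=
    ENNReal.mul_ne_top (by simp) (ENNReal.div_ne_top hz (by simpa using mul_pos ha hb))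
  have ne_top {w : ℝ≥0∞} {c : ℝ} (hw : w / ENNReal.ofReal c ≠ ∞) : w ≠ ∞ := by
    rintro rfl
    exact hw (ENNReal.top_div_of_ne_top ENNReal.ofReal_ne_top)
  have hsum := ENNReal.add_ne_top.1 (ne_top_of_le_ne_top hright h)
  lift x to NNReal using ne_top hsum.1
  lift y to NNReal using ne_top hsum.2
  lift z to NNReal using hz
  have hreal : (x : ℝ) / a + y / b ≤ 2 * (z / √(a * b)) := by
    have := ENNReal.toReal_mono hright h
    rw [ENNReal.toReal_add hsum.1 hsum.2] at this
    simpa [ENNReal.toReal_ofReal, ha.le, hb.le] using this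
  have hsq : ((x : ℝ) / a + y / b) ^ 2 ≤ (2 * (z / √(a * b))) ^ 2 := by gcongr
  rw [mul_pow, div_pow, Real.sq_sqrt (mul_pos ha hb).le] at hsq
  have hdiv : (x : ℝ) * y / (a * b) ≤ z ^ 2 / (a * b) := by
    rw [← div_mul_div_comm]
    nlinarith [sq_nonneg ((x : ℝ) / a - y / b)]
  exact_mod_cast (div_le_div_iff_of_pos_right (mul_pos ha hb)).1 hdiv

theorem lintegral_mul_lintegral_le_of_bddAbove {F G H : ℝ → ℝ} (hF : Measurable F)
    (hG : Measurable G) (hH : Measurable H) (hF0 : 0 ≤ F) (hG0 : 0 ≤ G) (hH0 : 0 ≤ H)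
    (hF1 : BddAbove (range F)) (hG1 : BddAbove (range G))
    (h : ∀ x y, F x * G y ≤ H (midpoint ℝ x y) ^ 2) :
    (∫⁻ x, ENNReal.ofReal (F x)) * (∫⁻ x, ENNReal.ofReal (G x))
      ≤ (∫⁻ x, ENNReal.ofReal (H x)) ^ 2 := by
  have hFa : IsLUB (range F) (sSup (range F)) := isLUB_csSup (range_nonempty _) hF1
  have hGb : IsLUB (range G) (sSup (range G)) := isLUB_csSup (range_nonempty _) hG1
  set a := sSup (range F)
  set b := sSup (range G)
  rcases le_or_gt a 0 with ha | ha
  · simp [fun x => le_antisymm ((hFa.1 ⟨x, rfl⟩).trans ha) (hF0 x)]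
  rcases le_or_gt b 0 with hb | hb
  · simp [fun x => le_antisymm ((hGb.1 ⟨x, rfl⟩).trans hb) (hG0 x)]
  have hab := Real.sqrt_pos.2 (mul_pos ha hb)
  refine mul_le_sq_of_div_add_div_le ha hb ?_
  rw [← lintegral_ofReal_div hF ha, ← lintegral_ofReal_div hG hb, ← lintegral_ofReal_div hH hab]
  refine lintegral_add_lintegral_le (hF.div_const _) (hG.div_const _) (hH.div_const _)
    (fun x => div_nonneg (hF0 x) ha.le) (fun x => div_nonneg (hG0 x) hb.le)
    (fun x => div_nonneg (hH0 x) hab.le) (isLUB_range_div ha hFa) (isLUB_range_div hb hGb)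
    fun x y => ?_
  rw [div_pow, Real.sq_sqrt (mul_pos ha hb).le, div_mul_div_comm]
  gcongr
  exact h x y

theorem lintegral_eq_iSup_lintegral_min {X : Type*} [MeasurableSpace X] {μ : Measure X}
    {f : X → ℝ≥0∞} (hf : Measurable f) : ∫⁻ x, f x ∂μ = ⨆ n : ℕ, ∫⁻ x, min (f x) n ∂μ := by
  have hsup (x : X) : f x = ⨆ n : ℕ, min (f x) n := by
    rw [← inf_iSup_eq, ENNReal.iSup_natCast, inf_top_eq]
  calc ∫⁻ x, f x ∂μ = ∫⁻ x, ⨆ n : ℕ, min (f x) n ∂μ := lintegral_congr hsup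
    _ = ⨆ n : ℕ, ∫⁻ x, min (f x) n ∂μ := lintegral_iSup (fun n => by fun_prop)
      fun m n hmn x => min_le_min_left _ (by exact_mod_cast hmn)

theorem isPrekopaLeindler_volume_real : IsPrekopaLeindler (volume : Measure ℝ) := by
  intro f g h hf hg hh hfgh
  have truncated (n : ℕ) :
      (∫⁻ x, min (f x) n) * ∫⁻ x, min (g x) n ≤ (∫⁻ x, min (h x) n) ^ 2 := by
    have min_ne_top (a : ℝ≥0∞) : min a n ≠ ∞ := by simp
    have bddAbove (f : ℝ → ℝ≥0∞) : BddAbove (range fun x => (min (f x) n).toReal) := by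
      refine ⟨n, ?_⟩
      rintro _ ⟨x, rfl⟩
      exact ENNReal.toReal_mono (by simp) (min_le_right _ _)
    have := lintegral_mul_lintegral_le_of_bddAbove (F := fun x => (min (f x) n).toReal)
      (G := fun x => (min (g x) n).toReal) (H := fun x => (min (h x) n).toReal) (by fun_prop)
      (by fun_prop) (by fun_prop) (fun _ => ENNReal.toReal_nonneg) (fun _ => ENNReal.toReal_nonneg)
      (fun _ => ENNReal.toReal_nonneg) (bddAbove f) (bddAbove g) fun x y => by
        rw [← ENNReal.toReal_mul, ← ENNReal.toReal_pow]
        refine ENNReal.toReal_mono (by simp) ?_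
        rcases min_cases (h (midpoint ℝ x y)) n with hmin | hmin
        · rw [hmin.1]
          exact (mul_le_mul' (min_le_left _ _) (min_le_left _ _)).trans (hfgh x y)
        · rw [hmin.1, sq]
          exact mul_le_mul' (min_le_right _ _) (min_le_right _ _)
    simpa only [ENNReal.ofReal_toReal (min_ne_top _)] using this
  rw [lintegral_eq_iSup_lintegral_min hf, lintegral_eq_iSup_lintegral_min hg]
  simp_rw [ENNReal.iSup_mul, ENNReal.mul_iSup]
  refine iSup₂_le fun m n => ?_
  calc (∫⁻ x, min (f x) m) * ∫⁻ x, min (g x) n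
      ≤ (∫⁻ x, min (f x) (max m n : ℕ)) * ∫⁻ x, min (g x) (max m n : ℕ) := by
        gcongr <;> simp
    _ ≤ (∫⁻ x, min (h x) (max m n : ℕ)) ^ 2 := truncated _
    _ ≤ (∫⁻ x, h x) ^ 2 := by
        gcongr
        exact min_le_left _ _

variable {E F : Type*} [AddCommGroup E] [Module ℝ E] [MeasurableSpace E]
  [AddCommGroup F] [Module ℝ F] [MeasurableSpace F] {μ : Measure E} {ν : Measure F}

theorem IsPrekopaLeindler.prod [SFinite ν] (hμ : IsPrekopaLeindler μ) (hν : IsPrekopaLeindler ν) :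
    IsPrekopaLeindler (μ.prod ν) := by
  intro f g h hf hg hh hfgh
  rw [lintegral_prod _ hf.aemeasurable, lintegral_prod _ hg.aemeasurable,
    lintegral_prod _ hh.aemeasurable]
  refine hμ hf.lintegral_prod_right' hg.lintegral_prod_right' hh.lintegral_prod_right'
    fun x x' => ?_
  exact hν (by fun_prop) (by fun_prop) (by fun_prop) fun y y' => hfgh (x, y) (x', y')

theorem IsPrekopaLeindler.of_measurePreserving (hμ : IsPrekopaLeindler μ) (T : E ≃ₗ[ℝ] F)
    (hT : MeasurePreserving T μ ν) : IsPrekopaLeindler ν := by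
  intro f g h hf hg hh hfgh
  rw [← hT.lintegral_comp hf, ← hT.lintegral_comp hg, ← hT.lintegral_comp hh]
  refine hμ (hf.comp hT.measurable) (hg.comp hT.measurable) (hh.comp hT.measurable) fun x y => ?_
  simpa [midpoint_eq_smul_add] using hfgh (T x) (T y)

theorem isPrekopaLeindler_volume_pi : ∀ d : ℕ, IsPrekopaLeindler (volume : Measure (Fin d → ℝ))
  | 0 => fun f g h _ _ _ hfgh => by
    simpa [volume_pi, Measure.pi_of_empty _ 0, Subsingleton.elim (midpoint ℝ _ _) (0 : Fin 0 → ℝ)]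
      using hfgh 0 0
  | d + 1 => by
    have hcons : ⇑(MeasurableEquiv.piFinSuccAbove (fun _ : Fin (d + 1) => ℝ) 0).symm =
        Fin.consLinearEquiv ℝ fun _ => ℝ := by
      ext1 x
      exact Fin.insertNth_zero' _ _
    have hprod := isPrekopaLeindler_volume_real.prod (isPrekopaLeindler_volume_pi d)
    exact hprod.of_measurePreserving (Fin.consLinearEquiv ℝ fun _ => ℝ)
      (hcons ▸ (volume_preserving_piFinSuccAbove (fun _ => ℝ) 0).symm)

theorem isPrekopaLeindler_volume {E : Type*} [NormedAddCommGroup E] [InnerProductSpace ℝ E]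
    [FiniteDimensional ℝ E] [MeasurableSpace E] [BorelSpace E] :
    IsPrekopaLeindler (volume : Measure E) := by
  let b := stdOrthonormalBasis ℝ E
  exact (isPrekopaLeindler_volume_pi _).of_measurePreserving
    ((WithLp.linearEquiv 2 ℝ _).symm.trans b.repr.symm.toLinearEquiv)
    (b.measurePreserving_repr_symm.comp (PiLp.volume_preserving_toLp _))

end PrekopaLeindler

section InfinitesimalPrekopa

theorem deriv_deriv_nonpos_of_isLocalMax {f : ℝ → ℝ} {a : ℝ} (hf : IsLocalMax f a)
    (hfa : ContinuousAt f a) : deriv (deriv f) a ≤ 0 := by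
  by_contra! hpos
  have hmin : IsLocalMin f a := isLocalMin_of_deriv_deriv_pos hpos hf.deriv_eq_zero hfa
  have hconst : f =ᶠ[𝓝 a] fun _ => f a := by
    filter_upwards [hf, hmin] with t htmax htmin using le_antisymm htmax htmin
  simp [hconst.deriv.deriv_eq] at hpos

theorem mul_deriv_deriv_le_sq {G G' : ℝ → ℝ} {G'' : ℝ}
    (hG : ∀ᶠ t in 𝓝 0, HasDerivAt G (G' t) t) (hG' : HasDerivAt G' G'' 0)
    (hlog : ∀ t, G t * G (-t) ≤ G 0 ^ 2) : G 0 * G'' ≤ G' 0 ^ 2 := by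
  have hneg : Tendsto (fun t : ℝ => -t) (𝓝 0) (𝓝 0) := by simpa using continuous_neg.tendsto (0 : ℝ)
  have hderiv : ∀ᶠ t in 𝓝 0,
      HasDerivAt (fun t => G t * G (-t)) (G' t * G (-t) - G t * G' (-t)) t := by
    filter_upwards [hG, hneg.eventually hG] with t ht hnt
    exact (ht.mul (hnt.scomp t (hasDerivAt_neg t))).congr_deriv (by simp [sub_eq_add_neg])
  have hderiv2 : HasDerivAt (deriv fun t => G t * G (-t)) (2 * (G 0 * G'' - G' 0 ^ 2)) 0 := by
    refine HasDerivAt.congr_of_eventuallyEq ?_ (hderiv.mono fun t ht => ht.deriv)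
    have hGneg : HasDerivAt (fun t => G (-t)) (-G' 0) 0 :=
      (HasDerivAt.scomp (0 : ℝ) (by simpa using hG.self_of_nhds) (hasDerivAt_neg 0)).congr_deriv
        (by simp)
    have hG'neg : HasDerivAt (fun t => G' (-t)) (-G'') 0 :=
      (HasDerivAt.scomp (0 : ℝ) (by simpa using hG') (hasDerivAt_neg 0)).congr_deriv (by simp)
    exact ((hG'.mul hGneg).sub (hG.self_of_nhds.mul hG'neg)).congr_deriv (by simp; ring)
  have hmax : IsLocalMax (fun t => G t * G (-t)) 0 :=
    .of_forall fun t => (hlog t).trans_eq (by simp [sq])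
  have := deriv_deriv_nonpos_of_isLocalMax hmax hderiv.self_of_nhds.continuousAt
  rw [hderiv2.deriv] at this
  linarith

/-- `HasDominatedDeriv μ ρ ρ'` says that `ρ' t x` is the derivative of `ρ t x` in the parameter `t`
and that both are dominated by an integrable function of `x` as long as `|t| < 1`, so that the
integral of `ρ t` may be differentiated under the integral sign. -/
structure HasDominatedDeriv {X : Type*} [MeasurableSpace X] (μ : Measure X)
    (ρ ρ' : ℝ → X → ℝ) : Prop where
  measurable : ∀ t, Measurable (ρ t)
  measurable' : ∀ t, Measurable (ρ' t)
  hasDerivAt : ∀ t x, HasDerivAt (ρ · x) (ρ' t x) t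
  exists_bound : ∃ b, Integrable b μ ∧ ∀ x, ∀ t ∈ Metric.ball (0 : ℝ) 1,
    ‖ρ t x‖ ≤ b x ∧ ‖ρ' t x‖ ≤ b x

namespace HasDominatedDeriv

variable {X : Type*} [MeasurableSpace X] {μ : Measure X} {ρ ρ' ρ'' : ℝ → X → ℝ}

theorem integrable (h : HasDominatedDeriv μ ρ ρ') {t : ℝ} (ht : t ∈ Metric.ball (0 : ℝ) 1) :
    Integrable (ρ t) μ := by
  obtain ⟨b, hb, hle⟩ := h.exists_bound
  exact hb.mono' (h.measurable t).aestronglyMeasurable (.of_forall fun x => (hle x t ht).1)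

theorem hasDerivAt_integral (h : HasDominatedDeriv μ ρ ρ') {t : ℝ}
    (ht : t ∈ Metric.ball (0 : ℝ) 1) :
    HasDerivAt (fun t => ∫ x, ρ t x ∂μ) (∫ x, ρ' t x ∂μ) t := by
  obtain ⟨b, hb, hle⟩ := h.exists_bound
  exact (hasDerivAt_integral_of_dominated_loc_of_deriv_le (Metric.isOpen_ball.mem_nhds ht)
    (.of_forall fun t => (h.measurable t).aestronglyMeasurable) (h.integrable ht)
    (h.measurable' t).aestronglyMeasurable
    (.of_forall fun x t ht => (hle x t ht).2) hb (.of_forall fun x t _ => h.hasDerivAt t x)).2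

end HasDominatedDeriv

theorem integral_mul_integral_le_sq {E : Type*} [AddCommGroup E] [Module ℝ E] [MeasurableSpace E]
    {μ : Measure E} (hμ : IsPrekopaLeindler μ) {f g h : E → ℝ} (hf : Measurable f)
    (hg : Measurable g) (hh : Measurable h) (hf0 : 0 ≤ f) (hg0 : 0 ≤ g) (hh0 : 0 ≤ h)
    (hh_int : Integrable h μ) (hfgh : ∀ x y, f x * g y ≤ h (midpoint ℝ x y) ^ 2) :
    (∫ x, f x ∂μ) * ∫ x, g x ∂μ ≤ (∫ x, h x ∂μ) ^ 2 := by
  rw [integral_eq_lintegral_of_nonneg_ae (.of_forall hf0) hf.aestronglyMeasurable,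
    integral_eq_lintegral_of_nonneg_ae (.of_forall hg0) hg.aestronglyMeasurable,
    integral_eq_lintegral_of_nonneg_ae (.of_forall hh0) hh.aestronglyMeasurable,
    ← ENNReal.toReal_mul, ← ENNReal.toReal_pow]
  refine ENNReal.toReal_mono (ENNReal.pow_ne_top hh_int.lintegral_lt_top.ne) ?_
  refine hμ hf.ennreal_ofReal hg.ennreal_ofReal hh.ennreal_ofReal fun x y => ?_
  rw [← ENNReal.ofReal_mul (hf0 x), ← ENNReal.ofReal_pow (hh0 _)]
  exact ENNReal.ofReal_le_ofReal (hfgh x y)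

/-- Prékopa's theorem says that the marginal `t ↦ ∫ x, ρ t x ∂μ` of a log-concave function is
log-concave; this is its infinitesimal form. -/
theorem integral_mul_integral_deriv_deriv_le_sq {E : Type*} [AddCommGroup E] [Module ℝ E]
    [MeasurableSpace E] {μ : Measure E} (hμ : IsPrekopaLeindler μ) {ρ ρ' ρ'' : ℝ → E → ℝ}
    (h : HasDominatedDeriv μ ρ ρ') (h' : HasDominatedDeriv μ ρ' ρ'')
    (hpos : ∀ t, 0 ≤ ρ t)
    (hlog : ∀ t x y, ρ t x * ρ (-t) y ≤ ρ 0 (midpoint ℝ x y) ^ 2) :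
    (∫ x, ρ 0 x ∂μ) * ∫ x, ρ'' 0 x ∂μ ≤ (∫ x, ρ' 0 x ∂μ) ^ 2 := by
  have h0 : (0 : ℝ) ∈ Metric.ball (0 : ℝ) 1 := Metric.mem_ball_self one_pos
  refine mul_deriv_deriv_le_sq (G := fun t => ∫ x, ρ t x ∂μ) ?_ (h'.hasDerivAt_integral h0)
    fun t => integral_mul_integral_le_sq hμ (h.measurable _) (h.measurable _)
      (h.measurable _) (hpos _) (hpos _) (hpos _) (h.integrable h0) (hlog t)
  filter_upwards [Metric.isOpen_ball.mem_nhds h0] with t ht using h.hasDerivAt_integral ht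

end InfinitesimalPrekopa

section Softmax

variable {I : Type*} [Fintype I]

/-- The partition function of the softmax weights at inverse temperature `β`. -/
noncomputable def partitionFunction (β : ℝ) (y : I → ℝ) : ℝ := ∑ i, Real.exp (β * y i)

/-- The softmax weights at inverse temperature `β`. As `β → ∞` they concentrate on the largest
coordinate of `y`. -/
noncomputable def softmax (β : ℝ) (y : I → ℝ) (i : I) : ℝ :=
  Real.exp (β * y i) / partitionFunction β y

/-- The softmax average of `ω`; it is the derivative of the log-sum-exp of `y` in direction `ω`. -/
noncomputable def softmaxMean (β : ℝ) (y ω : I → ℝ) : ℝ := ∑ i, softmax β y i * ω i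

/-- The softmax second moment of `ω`. -/
noncomputable def softmaxSq (β : ℝ) (y ω : I → ℝ) : ℝ := ∑ i, softmax β y i * ω i ^ 2

/-- The exponential `exp (-lse β y)` of minus the log-sum-exp `lse β y = log (∑ exp (β yᵢ)) / β`, a
smooth approximation of `exp (-max y)`. -/
noncomputable def expNegLse (β : ℝ) (y : I → ℝ) : ℝ := partitionFunction β y ^ (-β⁻¹)

/-- The second derivative of `expNegLse β` in direction `ω`, divided by `expNegLse β`. -/
noncomputable def lseCurvature (β : ℝ) (y ω : I → ℝ) : ℝ :=
  (1 + β) * softmaxMean β y ω ^ 2 - β * softmaxSq β y ω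

@[fun_prop]
theorem continuous_partitionFunction (β : ℝ) : Continuous (partitionFunction (I := I) β) := by
  unfold partitionFunction
  fun_prop

theorem softmax_nonneg (β : ℝ) (y : I → ℝ) (i : I) : 0 ≤ softmax β y i :=
  div_nonneg (Real.exp_pos _).le (Finset.sum_nonneg fun _ _ => (Real.exp_pos _).le)

theorem softmaxSq_nonneg (β : ℝ) (y ω : I → ℝ) : 0 ≤ softmaxSq β y ω :=
  Finset.sum_nonneg fun i _ => mul_nonneg (softmax_nonneg β y i) (sq_nonneg _)

theorem expNegLse_le {β : ℝ} (hβ : 0 < β) (y : I → ℝ) (i : I) :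
    expNegLse β y ≤ Real.exp (-y i) := by
  have hle : Real.exp (β * y i) ≤ partitionFunction β y :=
    Finset.single_le_sum (f := fun j => Real.exp (β * y j)) (fun _ _ => (Real.exp_pos _).le)
      (Finset.mem_univ i)
  calc expNegLse β y ≤ Real.exp (β * y i) ^ (-β⁻¹) :=
        Real.rpow_le_rpow_of_nonpos (Real.exp_pos _) hle (by simpa using hβ.le)
    _ = Real.exp (-y i) := by
        rw [← Real.exp_mul]
        congr 1
        field_simp

theorem partitionFunction_midpoint_sq_le (β : ℝ) (y z : I → ℝ) :
    partitionFunction β (midpoint ℝ y z) ^ 2 ≤ partitionFunction β y * partitionFunction β z := by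
  have hmid (i : I) : Real.exp (β * midpoint ℝ y z i) =
      Real.exp (β * y i / 2) * Real.exp (β * z i / 2) := by
    rw [← Real.exp_add, midpoint_eq_smul_add, Pi.smul_apply, Pi.add_apply, smul_eq_mul,
      invOf_eq_inv]
    congr 1
    ring
  have hhalf (a : ℝ) : Real.exp (a / 2) ^ 2 = Real.exp a := by
    rw [← Real.exp_nat_mul]
    congr 1
    push_cast
    ring
  simpa only [partitionFunction, hmid, hhalf] using
    Finset.sum_mul_sq_le_sq_mul_sq Finset.univ (fun i => Real.exp (β * y i / 2))
      (fun i => Real.exp (β * z i / 2))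

variable [Nonempty I]

theorem partitionFunction_pos (β : ℝ) (y : I → ℝ) : 0 < partitionFunction β y :=
  Finset.sum_pos (fun _ _ => Real.exp_pos _) Finset.univ_nonempty

@[fun_prop]
theorem continuous_softmax (β : ℝ) (i : I) : Continuous fun y : I → ℝ => softmax β y i := by
  unfold softmax
  exact Continuous.div (by fun_prop) (by fun_prop) fun y => (partitionFunction_pos β y).ne'

@[fun_prop]
theorem continuous_softmaxMean (β : ℝ) (ω : I → ℝ) : Continuous fun y => softmaxMean β y ω := by
  unfold softmaxMean
  fun_prop

@[fun_prop]
theorem continuous_softmaxSq (β : ℝ) (ω : I → ℝ) : Continuous fun y => softmaxSq β y ω := by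
  unfold softmaxSq
  fun_prop

@[fun_prop]
theorem continuous_lseCurvature (β : ℝ) (ω : I → ℝ) :
    Continuous fun y => lseCurvature β y ω := by
  unfold lseCurvature
  fun_prop

@[fun_prop]
theorem continuous_expNegLse (β : ℝ) : Continuous (expNegLse (I := I) β) := by
  unfold expNegLse
  exact (by fun_prop : Continuous (partitionFunction β)).rpow_const
    fun y => .inl (partitionFunction_pos β y).ne'

theorem expNegLse_pos (β : ℝ) (y : I → ℝ) : 0 < expNegLse β y :=
  Real.rpow_pos_of_pos (partitionFunction_pos β y) _

theorem sum_softmax (β : ℝ) (y : I → ℝ) : ∑ i, softmax β y i = 1 := by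
  simp_rw [softmax, ← Finset.sum_div]
  exact div_self (partitionFunction_pos β y).ne'

theorem softmax_le_one (β : ℝ) (y : I → ℝ) (i : I) : softmax β y i ≤ 1 :=
  (Finset.single_le_sum (fun j _ => softmax_nonneg β y j) (Finset.mem_univ i)).trans_eq
    (sum_softmax β y)

theorem abs_softmaxMean_le (β : ℝ) (y ω : I → ℝ) : |softmaxMean β y ω| ≤ ‖ω‖ :=
  calc |softmaxMean β y ω| ≤ ∑ i, |softmax β y i * ω i| := Finset.abs_sum_le_sum_abs _ _
    _ ≤ ∑ i, softmax β y i * ‖ω‖ := by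
      gcongr with i
      rw [abs_mul, abs_of_nonneg (softmax_nonneg β y i)]
      exact mul_le_mul_of_nonneg_left (norm_le_pi_norm ω i) (softmax_nonneg β y i)
    _ = ‖ω‖ := by rw [← Finset.sum_mul, sum_softmax, one_mul]

theorem softmaxSq_le (β : ℝ) (y ω : I → ℝ) : softmaxSq β y ω ≤ ‖ω‖ ^ 2 :=
  calc softmaxSq β y ω ≤ ∑ i, softmax β y i * ‖ω‖ ^ 2 := by
        unfold softmaxSq
        refine Finset.sum_le_sum fun i _ => mul_le_mul_of_nonneg_left ?_ (softmax_nonneg β y i)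
        exact sq_le_sq.2 ((norm_le_pi_norm ω i).trans (le_abs_self _))
    _ = ‖ω‖ ^ 2 := by rw [← Finset.sum_mul, sum_softmax, one_mul]

theorem abs_lseCurvature_le {β : ℝ} (hβ : 0 ≤ β) (y ω : I → ℝ) :
    |lseCurvature β y ω| ≤ (1 + β) * ‖ω‖ ^ 2 := by
  have hmean : softmaxMean β y ω ^ 2 ≤ ‖ω‖ ^ 2 :=
    sq_le_sq.2 ((abs_softmaxMean_le β y ω).trans (le_abs_self _))
  have hsq := softmaxSq_le β y ω
  have hsq0 := softmaxSq_nonneg β y ω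
  rw [lseCurvature, abs_le]
  constructor <;> nlinarith [sq_nonneg (softmaxMean β y ω)]

/-- The covariance identity
`∑ᵢⱼ πᵢ πⱼ (ωᵢ - ωⱼ)² = 2 (∑ πᵢ ωᵢ² - (∑ πᵢ ωᵢ)²)` for softmax weights. -/
theorem lseCurvature_eq (β : ℝ) (y ω : I → ℝ) :
    lseCurvature β y ω = (∑ i, softmax β y i * ω i ^ 2) -
      (1 + β) / 2 * ∑ i, ∑ j, softmax β y i * softmax β y j * (ω i - ω j) ^ 2 := by
  have hexpand : ∑ i, ∑ j, softmax β y i * softmax β y j * (ω i - ω j) ^ 2 =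
      (∑ i, softmax β y i * ω i ^ 2) * ∑ i, softmax β y i +
        (∑ i, softmax β y i) * ∑ i, softmax β y i * ω i ^ 2 -
        2 * ((∑ i, softmax β y i * ω i) * ∑ i, softmax β y i * ω i) := by
    simp_rw [Finset.sum_mul_sum, Finset.mul_sum, ← Finset.sum_add_distrib,
      ← Finset.sum_sub_distrib]
    exact Finset.sum_congr rfl fun i _ => Finset.sum_congr rfl fun j _ => by ring
  rw [hexpand, sum_softmax, lseCurvature, softmaxMean, softmaxSq]
  ring

theorem hasDerivAt_partitionFunction (β : ℝ) (y ω : I → ℝ) (t : ℝ) :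
    HasDerivAt (fun t : ℝ => partitionFunction β (y + t • ω))
      (β * softmaxMean β (y + t • ω) ω * partitionFunction β (y + t • ω)) t := by
  have hterm (i : I) : HasDerivAt (fun t : ℝ => Real.exp (β * (y i + t * ω i)))
      (β * (Real.exp (β * (y i + t * ω i)) * ω i)) t := by
    have := ((((hasDerivAt_id t).mul_const (ω i)).const_add (y i)).const_mul β).exp
    exact this.congr_deriv (by simp only [id_eq]; ring)
  refine (HasDerivAt.fun_sum fun i _ => hterm i).congr_deriv ?_
  have hZ := (partitionFunction_pos β (y + t • ω)).ne'
  simp_rw [softmaxMean, softmax, ← Finset.mul_sum, div_mul_eq_mul_div, ← Finset.sum_div]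
  rw [mul_assoc, div_mul_cancel₀ _ hZ]
  simp

theorem hasDerivAt_expNegLse {β : ℝ} (hβ : β ≠ 0) (y ω : I → ℝ) (t : ℝ) :
    HasDerivAt (fun t : ℝ => expNegLse β (y + t • ω))
      (-softmaxMean β (y + t • ω) ω * expNegLse β (y + t • ω)) t := by
  have hZ := partitionFunction_pos β (y + t • ω)
  refine ((hasDerivAt_partitionFunction β y ω t).rpow_const (.inl hZ.ne')).congr_deriv ?_
  rw [expNegLse, Real.rpow_sub_one hZ.ne']
  field_simp

theorem hasDerivAt_softmax (β : ℝ) (y ω : I → ℝ) (i : I) (t : ℝ) :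
    HasDerivAt (fun t : ℝ => softmax β (y + t • ω) i)
      (β * softmax β (y + t • ω) i * (ω i - softmaxMean β (y + t • ω) ω)) t := by
  have hZ := (partitionFunction_pos β (y + t • ω)).ne'
  have hexp := ((((hasDerivAt_id t).mul_const (ω i)).const_add (y i)).const_mul β).exp
  refine (hexp.div (hasDerivAt_partitionFunction β y ω t) hZ).congr_deriv ?_
  simp only [softmax, Pi.add_apply, Pi.smul_apply, smul_eq_mul, id_eq]
  field_simp

theorem hasDerivAt_softmaxMean (β : ℝ) (y ω : I → ℝ) (t : ℝ) :
    HasDerivAt (fun t : ℝ => softmaxMean β (y + t • ω) ω)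
      (β * (softmaxSq β (y + t • ω) ω - softmaxMean β (y + t • ω) ω ^ 2)) t := by
  refine (HasDerivAt.fun_sum fun i _ =>
    (hasDerivAt_softmax β y ω i t).mul_const (ω i)).congr_deriv ?_
  set m := softmaxMean β (y + t • ω) ω with hm
  calc ∑ i, β * softmax β (y + t • ω) i * (ω i - m) * ω i
      = β * ((∑ i, softmax β (y + t • ω) i * ω i ^ 2) -
          m * ∑ i, softmax β (y + t • ω) i * ω i) := by
        simp_rw [Finset.mul_sum, ← Finset.sum_sub_distrib, Finset.mul_sum]
        exact Finset.sum_congr rfl fun i _ => by ring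
    _ = β * (softmaxSq β (y + t • ω) ω - m ^ 2) := by rw [sq m, hm, softmaxMean, softmaxSq]

theorem hasDerivAt_neg_softmaxMean_mul_expNegLse {β : ℝ} (hβ : β ≠ 0) (y ω : I → ℝ) (t : ℝ) :
    HasDerivAt (fun t : ℝ => -softmaxMean β (y + t • ω) ω * expNegLse β (y + t • ω))
      (lseCurvature β (y + t • ω) ω * expNegLse β (y + t • ω)) t :=
  ((hasDerivAt_softmaxMean β y ω t).fun_neg.mul (hasDerivAt_expNegLse hβ y ω t)).congr_deriv
    (by rw [lseCurvature]; ring)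

theorem expNegLse_mul_le {β : ℝ} (hβ : 0 ≤ β) (y z : I → ℝ) :
    expNegLse β y * expNegLse β z ≤ expNegLse β (midpoint ℝ y z) ^ 2 := by
  have hpos := partitionFunction_pos β (I := I)
  simp only [expNegLse]
  rw [← Real.mul_rpow (hpos y).le (hpos z).le, sq, ← Real.mul_rpow (hpos _).le (hpos _).le, ← sq]
  exact Real.rpow_le_rpow_of_nonpos (pow_pos (hpos _) 2) (partitionFunction_midpoint_sq_le β y z)
    (by simpa)

end Softmax

section GibbsMeasure

variable {I : Type*} {E : Type*} [NormedAddCommGroup E] [InnerProductSpace ℝ E] {p : I → E}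
  {ι : I → I}

/-- The vector of inner products of `x` with the points `p i`. If `p` is centrally symmetric, its
sup norm is the support function of the convex hull of `p`. -/
noncomputable def pairing (p : I → E) : E →L[ℝ] (I → ℝ) :=
  ContinuousLinearMap.pi fun i => innerSL ℝ (p i)

@[simp]
theorem pairing_apply (p : I → E) (x : E) (i : I) : pairing p x i = ⟪p i, x⟫ := rfl

theorem pairing_injective (hp : Submodule.span ℝ (range p) = ⊤) :
    Function.Injective (pairing p) := by
  refine (injective_iff_map_eq_zero _).2 fun x hx => ?_
  have hspan : Submodule.span ℝ (range p) ≤ (ℝ ∙ x)ᗮ := by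
    rw [Submodule.span_le]
    rintro _ ⟨i, rfl⟩
    exact Submodule.mem_orthogonal_singleton_iff_inner_left.2 (congrFun hx i)
  exact inner_self_eq_zero.1
    (Submodule.mem_orthogonal_singleton_iff_inner_left.1 (hspan (hp ▸ Submodule.mem_top)))

variable [Fintype I]

theorem exists_apply_eq_norm [Nonempty I] {y : I → ℝ} (hy : ∀ i, y (ι i) = -y i) :
    ∃ i, y i = ‖y‖ := by
  obtain ⟨i, hi⟩ := Finite.exists_max fun i => ‖y i‖
  have hnorm : ‖y‖ = |y i| :=
    le_antisymm ((pi_norm_le_iff_of_nonneg (norm_nonneg _)).2 hi) (norm_le_pi_norm y i)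
  rcases abs_choice (y i) with h | h
  · exact ⟨i, by rw [hnorm, h]⟩
  · exact ⟨ι i, by rw [hnorm, h, hy]⟩

theorem exists_inner_eq_norm_pairing [Nonempty I] (hι : ∀ i, p (ι i) = -p i) (x : E) :
    ∃ i, ⟪p i, x⟫ = ‖pairing p x‖ :=
  exists_apply_eq_norm (ι := ι) fun i => by simp [hι]

theorem inner_le_norm_pairing (p : I → E) (x : E) (i : I) : ⟪p i, x⟫ ≤ ‖pairing p x‖ :=
  (le_abs_self _).trans (norm_le_pi_norm (pairing p x) i)

theorem exists_mul_norm_le {F : Type*} [NormedAddCommGroup F] [NormedSpace ℝ F]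
    [FiniteDimensional ℝ E] {T : E →L[ℝ] F} (hT : Function.Injective T) :
    ∃ c > 0, ∀ x, c * ‖x‖ ≤ ‖T x‖ := by
  obtain ⟨K, hK, hanti⟩ := T.toLinearMap.exists_antilipschitzWith (LinearMap.ker_eq_bot.2 hT)
  refine ⟨(K : ℝ)⁻¹, by positivity, fun x => ?_⟩
  rw [inv_mul_le_iff₀ (by positivity)]
  exact hanti.le_mul_norm (map_zero _) x

theorem exp_neg_mul_le {c t : ℝ} (hc : 0 < c) (ht : 0 ≤ t) (k : ℕ) :
    Real.exp (-(c * t)) ≤ Real.exp c * k.factorial / c ^ k * (1 + t) ^ (-(k : ℝ)) := by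
  have ht1 : 0 < 1 + t := by positivity
  have hpow := Real.pow_div_factorial_le_exp (c * (1 + t)) (by positivity) k
  rw [div_le_iff₀ (by positivity), mul_add, mul_one, Real.exp_add] at hpow
  rw [Real.rpow_neg ht1.le, Real.rpow_natCast, ← div_eq_mul_inv, div_div, Real.exp_neg,
    inv_eq_one_div, div_le_div_iff₀ (Real.exp_pos _) (by positivity)]
  calc 1 * (c ^ k * (1 + t) ^ k) = (c + c * t) ^ k := by rw [one_mul, ← mul_pow]; ring_nf
    _ ≤ Real.exp c * Real.exp (c * t) * k.factorial := hpow
    _ = Real.exp c * k.factorial * Real.exp (c * t) := by ring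

variable [FiniteDimensional ℝ E] [MeasurableSpace E] [BorelSpace E]

theorem integrable_exp_neg_mul_norm {c : ℝ} (hc : 0 < c) :
    Integrable fun x : E => Real.exp (-(c * ‖x‖)) := by
  set k := Module.finrank ℝ E + 1
  have hk : (Module.finrank ℝ E : ℝ) < (k : ℝ) := by simp [k]
  refine ((integrable_one_add_norm hk).const_mul (Real.exp c * k.factorial / c ^ k)).mono'
    (by fun_prop) (.of_forall fun x => ?_)
  rw [Real.norm_of_nonneg (Real.exp_pos _).le]
  exact exp_neg_mul_le hc (norm_nonneg x) k

theorem integrable_exp_neg_norm {F : Type*} [NormedAddCommGroup F] [NormedSpace ℝ F]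
    {T : E →L[ℝ] F} (hT : Function.Injective T) : Integrable fun x => Real.exp (-‖T x‖) := by
  obtain ⟨c, hc, hle⟩ := exists_mul_norm_le hT
  refine (integrable_exp_neg_mul_norm hc).mono' (by fun_prop) (.of_forall fun x => ?_)
  rw [Real.norm_of_nonneg (Real.exp_pos _).le]
  exact Real.exp_le_exp.2 (neg_le_neg (hle x))

end GibbsMeasure

section Limit

variable {I : Type*} [Fintype I] {ι : I → I}

theorem expNegLse_le_exp_neg_norm [Nonempty I] {β : ℝ} (hβ : 0 < β) {y : I → ℝ}
    (hy : ∀ i, y (ι i) = -y i) (t : ℝ) (ω : I → ℝ) :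
    expNegLse β (y + t • ω) ≤ Real.exp (|t| * ‖ω‖) * Real.exp (-‖y‖) := by
  obtain ⟨i, hi⟩ := exists_apply_eq_norm hy
  refine (expNegLse_le hβ _ i).trans ?_
  rw [← Real.exp_add, Real.exp_le_exp]
  have hti : |t * ω i| ≤ |t| * ‖ω‖ := by
    rw [abs_mul]
    exact mul_le_mul_of_nonneg_left (norm_le_pi_norm ω i) (abs_nonneg t)
  simp only [Pi.add_apply, Pi.smul_apply, smul_eq_mul]
  linarith [neg_abs_le (t * ω i)]

theorem exp_neg_norm_le_expNegLse [Nonempty I] {β : ℝ} (hβ : 0 < β) (y : I → ℝ) :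
    (Fintype.card I : ℝ) ^ (-β⁻¹) * Real.exp (-‖y‖) ≤ expNegLse β y := by
  have hle : partitionFunction β y ≤ Fintype.card I * Real.exp (β * ‖y‖) := by
    have hterm (i : I) : Real.exp (β * y i) ≤ Real.exp (β * ‖y‖) := by
      gcongr
      exact (le_abs_self _).trans (norm_le_pi_norm y i)
    simpa [partitionFunction] using Finset.sum_le_sum fun i (_ : i ∈ Finset.univ) => hterm i
  calc (Fintype.card I : ℝ) ^ (-β⁻¹) * Real.exp (-‖y‖)
      = (Fintype.card I * Real.exp (β * ‖y‖)) ^ (-β⁻¹) := by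
        rw [Real.mul_rpow (by positivity) (by positivity), ← Real.exp_mul]
        congr 2
        field_simp
    _ ≤ expNegLse β y := Real.rpow_le_rpow_of_nonpos (partitionFunction_pos β y) hle
        (by simpa using hβ.le)

theorem tendsto_expNegLse [Nonempty I] {y : I → ℝ} (hy : ∀ i, y (ι i) = -y i) :
    Tendsto (fun β => expNegLse β y) atTop (𝓝 (Real.exp (-‖y‖))) := by
  have hpow : Tendsto (fun β : ℝ => (Fintype.card I : ℝ) ^ (-β⁻¹)) atTop (𝓝 1) := by
    have hcard : (Fintype.card I : ℝ) ≠ 0 := by simp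
    have hinv : Tendsto (fun β : ℝ => -β⁻¹) atTop (𝓝 0) := by
      simpa using (tendsto_inv_atTop_zero (𝕜 := ℝ)).neg
    simpa [Function.comp_def] using (Real.continuousAt_const_rpow (b := 0) hcard).tendsto.comp hinv
  refine tendsto_of_tendsto_of_tendsto_of_le_of_le' (by simpa using hpow.mul_const _)
    tendsto_const_nhds ?_ ?_
  · filter_upwards [eventually_gt_atTop 0] with β hβ using exp_neg_norm_le_expNegLse hβ y
  · filter_upwards [eventually_gt_atTop 0] with β hβ
    simpa using expNegLse_le_exp_neg_norm hβ hy 0 0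

variable {E : Type*} [NormedAddCommGroup E] [InnerProductSpace ℝ E] {p : I → E}

theorem expNegLse_pairing_le [Nonempty I] {β : ℝ} (hβ : 0 < β) (hι : ∀ i, p (ι i) = -p i) (x : E) :
    expNegLse β (pairing p x) ≤ Real.exp (-‖pairing p x‖) := by
  simpa using expNegLse_le_exp_neg_norm hβ (y := pairing p x) (ι := ι) (by simp [hι]) 0 0

variable [FiniteDimensional ℝ E] [MeasurableSpace E] [BorelSpace E]

/-- The measure with density `exp (-lse β (⟪p i, x⟫)ᵢ)`. -/
noncomputable def gibbsMeasure (β : ℝ) (p : I → E) : Measure E :=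
  volume.withDensity fun x => ENNReal.ofReal (expNegLse β (pairing p x))

/-- The limit of the measures `gibbsMeasure β p` as `β → ∞`: for centrally symmetric `p`, its
density is `exp (-h)` with `h` the support function of the convex hull of `p`. -/
noncomputable def limitMeasure (p : I → E) : Measure E :=
  volume.withDensity fun x => ENNReal.ofReal (Real.exp (-‖pairing p x‖))

theorem integral_limitMeasure (p : I → E) (f : E → ℝ) :
    ∫ x, f x ∂limitMeasure p = ∫ x, Real.exp (-‖pairing p x‖) * f x := by
  rw [limitMeasure, integral_withDensity_eq_integral_toReal_smul (by fun_prop) (by simp)]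
  simp [ENNReal.toReal_ofReal, (Real.exp_pos _).le]

theorem isFiniteMeasure_limitMeasure (hp : Submodule.span ℝ (range p) = ⊤) :
    IsFiniteMeasure (limitMeasure p) :=
  isFiniteMeasure_withDensity_ofReal (integrable_exp_neg_norm (pairing_injective hp)).2

theorem ae_limitMeasure_iff {P : E → Prop} : (∀ᵐ x ∂limitMeasure p, P x) ↔ ∀ᵐ x, P x := by
  rw [limitMeasure, ae_withDensity_iff (by fun_prop)]
  simp [Real.exp_pos]

variable [Nonempty I]

theorem integral_gibbsMeasure (β : ℝ) (p : I → E) (f : E → ℝ) :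
    ∫ x, f x ∂gibbsMeasure β p = ∫ x, expNegLse β (pairing p x) * f x := by
  rw [gibbsMeasure, integral_withDensity_eq_integral_toReal_smul (by fun_prop) (by simp)]
  simp [ENNReal.toReal_ofReal, (expNegLse_pos _ _).le]

theorem isFiniteMeasure_gibbsMeasure {β : ℝ} (hβ : 0 < β)
    (hp : Submodule.span ℝ (range p) = ⊤) (hι : ∀ i, p (ι i) = -p i) :
    IsFiniteMeasure (gibbsMeasure β p) := by
  refine isFiniteMeasure_withDensity_ofReal
    ((integrable_exp_neg_norm (pairing_injective hp)).mono' (by fun_prop)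
      (.of_forall fun x => ?_)).2
  rw [Real.norm_of_nonneg (expNegLse_pos _ _).le]
  exact expNegLse_pairing_le hβ hι x

theorem tendsto_integral_gibbsMeasure (hp : Submodule.span ℝ (range p) = ⊤)
    (hι : ∀ i, p (ι i) = -p i) {f : ℝ → E → ℝ} {g : E → ℝ} {C : ℝ}
    (hf : ∀ β, Measurable (f β)) (hC : ∀ β x, |f β x| ≤ C)
    (hfg : ∀ᵐ x, Tendsto (fun β => f β x) atTop (𝓝 (g x))) :
    Tendsto (fun β => ∫ x, f β x ∂gibbsMeasure β p) atTop (𝓝 (∫ x, g x ∂limitMeasure p)) := by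
  simp_rw [integral_gibbsMeasure, integral_limitMeasure]
  refine tendsto_integral_filter_of_dominated_convergence
    (fun x => Real.exp (-‖pairing p x‖) * C) (.of_forall fun β => ?_) ?_
    ((integrable_exp_neg_norm (pairing_injective hp)).mul_const C) ?_
  · have := hf β
    fun_prop
  · filter_upwards [eventually_gt_atTop 0] with β hβ
    refine .of_forall fun x => ?_
    rw [norm_mul, Real.norm_of_nonneg (expNegLse_pos _ _).le]
    exact mul_le_mul (expNegLse_pairing_le hβ hι x) (hC β x) (norm_nonneg _) (Real.exp_pos _).le
  · filter_upwards [hfg] with x hx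
    exact (tendsto_expNegLse (ι := ι) (by simp [hι])).mul hx

end Limit

section Logistic

/-- The density of the logistic distribution, the derivative of `Real.sigmoid`. -/
noncomputable def logisticDensity (t : ℝ) : ℝ := t.sigmoid * (1 - t.sigmoid)

/-- The derivative of `logisticDensity`. -/
noncomputable def logisticDensityDeriv (t : ℝ) : ℝ := logisticDensity t * (1 - 2 * t.sigmoid)

theorem abs_sigmoid_le_one (t : ℝ) : |t.sigmoid| ≤ 1 :=
  abs_le.2 ⟨by linarith [t.sigmoid_pos], t.sigmoid_lt_one.le⟩

theorem logisticDensity_pos (t : ℝ) : 0 < logisticDensity t :=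
  mul_pos t.sigmoid_pos (sub_pos.2 t.sigmoid_lt_one)

theorem abs_logisticDensity_le_one (t : ℝ) : |logisticDensity t| ≤ 1 := by
  rw [abs_of_pos (logisticDensity_pos t)]
  exact mul_le_one₀ t.sigmoid_lt_one.le (by linarith [t.sigmoid_lt_one])
    (by linarith [t.sigmoid_pos])

theorem abs_logisticDensityDeriv_le_one (t : ℝ) : |logisticDensityDeriv t| ≤ 1 := by
  rw [logisticDensityDeriv, abs_mul]
  exact mul_le_one₀ (abs_logisticDensity_le_one t) (abs_nonneg _)
    (abs_le.2 ⟨by linarith [t.sigmoid_lt_one], by linarith [t.sigmoid_pos]⟩)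

theorem hasDerivAt_logisticDensity (t : ℝ) :
    HasDerivAt logisticDensity (logisticDensityDeriv t) t := by
  have hS := Real.hasDerivAt_sigmoid t
  refine (hS.mul (hS.const_sub 1)).congr_deriv ?_
  rw [logisticDensityDeriv, logisticDensity]
  ring

@[fun_prop]
theorem continuous_logisticDensity : Continuous logisticDensity :=
  continuous_iff_continuousAt.2 fun t => (hasDerivAt_logisticDensity t).continuousAt

@[fun_prop]
theorem continuous_logisticDensityDeriv : Continuous logisticDensityDeriv := by
  unfold logisticDensityDeriv
  fun_prop

theorem logisticDensity_neg (t : ℝ) : logisticDensity (-t) = logisticDensity t := by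
  rw [logisticDensity, Real.sigmoid_neg, logisticDensity]
  ring

theorem logisticDensityDeriv_neg (t : ℝ) : logisticDensityDeriv (-t) = -logisticDensityDeriv t := by
  rw [logisticDensityDeriv, logisticDensity_neg, Real.sigmoid_neg, logisticDensityDeriv]
  ring

theorem sigmoid_mul_sigmoid_le (a b : ℝ) :
    a.sigmoid * b.sigmoid ≤ (midpoint ℝ a b).sigmoid ^ 2 := by
  set m := midpoint ℝ a b
  have hsplit : a + b = m + m := (midpoint_add_self ℝ a b).symm
  have hprod : Real.exp (-a) * Real.exp (-b) = Real.exp (-m) ^ 2 := by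
    rw [← Real.exp_add, sq, ← Real.exp_add]
    congr 1
    linarith
  have hamgm : 2 * Real.exp (-m) ≤ Real.exp (-a) + Real.exp (-b) := by
    refine abs_le_of_sq_le_sq' ?_ (by positivity) |>.2
    nlinarith [sq_nonneg (Real.exp (-a) - Real.exp (-b))]
  simp only [Real.sigmoid]
  rw [← mul_inv, inv_pow]
  gcongr
  nlinarith

end Logistic

namespace HasDominatedDeriv

variable {X : Type*} [MeasurableSpace X] {μ : Measure X} {ρ ρ' σ σ' v v' : ℝ → X → ℝ}

theorem add (h : HasDominatedDeriv μ ρ ρ') (hσ : HasDominatedDeriv μ σ σ') :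
    HasDominatedDeriv μ (ρ + σ) (ρ' + σ') := by
  obtain ⟨b, hb, hle⟩ := h.exists_bound
  obtain ⟨c, hc, hle'⟩ := hσ.exists_bound
  refine ⟨fun t => (h.measurable t).add (hσ.measurable t),
    fun t => (h.measurable' t).add (hσ.measurable' t),
    fun t x => (h.hasDerivAt t x).add (hσ.hasDerivAt t x), b + c, hb.add hc, fun x t ht => ?_⟩
  exact ⟨norm_add_le_of_le (hle x t ht).1 (hle' x t ht).1,
    norm_add_le_of_le (hle x t ht).2 (hle' x t ht).2⟩

theorem bounded_mul (h : HasDominatedDeriv μ ρ ρ') (hv : ∀ t, Measurable (v t))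
    (hv' : ∀ t, Measurable (v' t)) (hderiv : ∀ t x, HasDerivAt (v · x) (v' t x) t) {B : ℝ}
    (hB : ∀ t x, |v t x| ≤ B) (hB' : ∀ t x, |v' t x| ≤ B) :
    HasDominatedDeriv μ (v * ρ) (v' * ρ + v * ρ') := by
  obtain ⟨b, hb, hle⟩ := h.exists_bound
  have hmul {w : ℝ → X → ℝ} (hw : ∀ t x, |w t x| ≤ B) {r : ℝ} {x : X} (hr : ‖r‖ ≤ b x) (t : ℝ) :
      ‖w t x * r‖ ≤ B * b x := by
    rw [norm_mul]
    exact mul_le_mul (hw t x) hr (norm_nonneg _) ((abs_nonneg _).trans (hw t x))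
  refine ⟨fun t => (hv t).mul (h.measurable t),
    fun t => ((hv' t).mul (h.measurable t)).add ((hv t).mul (h.measurable' t)),
    fun t x => (hderiv t x).mul (h.hasDerivAt t x), fun x => B * b x + B * b x,
    (hb.const_mul B).add (hb.const_mul B), fun x t ht => ⟨?_, ?_⟩⟩
  · have hρ := hmul hB (hle x t ht).1 t
    exact hρ.trans (le_add_of_nonneg_left ((norm_nonneg _).trans hρ))
  · exact norm_add_le_of_le (hmul hB' (hle x t ht).1 t) (hmul hB (hle x t ht).2 t)

end HasDominatedDeriv

section GibbsInequality

variable {I : Type*} [Fintype I] [Nonempty I] {ι : I → I}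
  {E : Type*} [NormedAddCommGroup E] [InnerProductSpace ℝ E] {p : I → E} {β : ℝ}

theorem norm_mul_expNegLse_pairing_le (hβ : 0 < β) (hι : ∀ i, p (ι i) = -p i) {a C : ℝ}
    (ha : |a| ≤ C) (ω : I → ℝ) (x : E) {t : ℝ} (ht : t ∈ Metric.ball (0 : ℝ) 1) :
    ‖a * expNegLse β (pairing p x + t • ω)‖ ≤
      C * Real.exp ‖ω‖ * Real.exp (-‖pairing p x‖) := by
  have ht1 : |t| ≤ 1 := by simpa using (mem_ball_zero_iff.1 ht).le
  have hexp := expNegLse_le_exp_neg_norm hβ (y := pairing p x) (ι := ι) (by simp [hι]) t ω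
  rw [norm_mul, Real.norm_of_nonneg (expNegLse_pos _ _).le, mul_assoc]
  refine mul_le_mul ha (hexp.trans ?_) (expNegLse_pos _ _).le ((abs_nonneg a).trans ha)
  gcongr
  exact mul_le_of_le_one_left (norm_nonneg ω) ht1

theorem hasDerivAt_sigmoid_add_mul (c η t : ℝ) :
    HasDerivAt (fun t => (c + η * t).sigmoid) (η * logisticDensity (c + η * t)) t := by
  have hlin := ((hasDerivAt_id t).const_mul η).const_add c
  exact ((Real.hasDerivAt_sigmoid _).comp t hlin).congr_deriv (by simp [logisticDensity, mul_comm])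

theorem hasDerivAt_logisticDensity_add_mul (c η t : ℝ) :
    HasDerivAt (fun t => η * logisticDensity (c + η * t))
      (η ^ 2 * logisticDensityDeriv (c + η * t)) t := by
  have hlin := ((hasDerivAt_id t).const_mul η).const_add c
  exact (((hasDerivAt_logisticDensity _).comp t hlin).const_mul η).congr_deriv (by simp; ring)

theorem sigmoid_mul_expNegLse_mul_le (hβ : 0 ≤ β) (ω : I → ℝ) (θ : E) (s η t : ℝ) (x y : E) :
    (⟪θ, x⟫ - s + η * t).sigmoid * expNegLse β (pairing p x + t • ω) *
        ((⟪θ, y⟫ - s + η * -t).sigmoid * expNegLse β (pairing p y + -t • ω)) ≤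
      ((⟪θ, midpoint ℝ x y⟫ - s + η * 0).sigmoid *
        expNegLse β (pairing p (midpoint ℝ x y) + (0 : ℝ) • ω)) ^ 2 := by
  have hvec : pairing p (midpoint ℝ x y) + (0 : ℝ) • ω =
      midpoint ℝ (pairing p x + t • ω) (pairing p y + -t • ω) := by
    simp only [midpoint_eq_smul_add, map_smul, map_add]
    module
  have harg : ⟪θ, midpoint ℝ x y⟫ - s + η * 0 =
      midpoint ℝ (⟪θ, x⟫ - s + η * t) (⟪θ, y⟫ - s + η * -t) := by
    simp only [midpoint_eq_smul_add, inner_smul_right, inner_add_right, invOf_eq_inv, smul_eq_mul]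
    ring
  rw [hvec, harg, mul_mul_mul_comm, mul_pow]
  exact mul_le_mul (sigmoid_mul_sigmoid_le _ _) (expNegLse_mul_le hβ _ _)
    (mul_pos (expNegLse_pos _ _) (expNegLse_pos _ _)).le (sq_nonneg _)

variable [FiniteDimensional ℝ E] [MeasurableSpace E] [BorelSpace E]

theorem hasDominatedDeriv_expNegLse (hβ : 0 < β) (hp : Submodule.span ℝ (range p) = ⊤)
    (hι : ∀ i, p (ι i) = -p i) (ω : I → ℝ) :
    HasDominatedDeriv volume (fun t x => expNegLse β (pairing p x + t • ω))
      (fun t x => -softmaxMean β (pairing p x + t • ω) ω * expNegLse β (pairing p x + t • ω)) := by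
  refine ⟨fun t => by fun_prop, fun t => by fun_prop,
    fun t x => hasDerivAt_expNegLse hβ.ne' _ ω t, _,
    (integrable_exp_neg_norm (pairing_injective hp)).const_mul ((1 + ‖ω‖) * Real.exp ‖ω‖),
    fun x t ht => ⟨?_, norm_mul_expNegLse_pairing_le hβ hι ?_ ω x ht⟩⟩
  · simpa using norm_mul_expNegLse_pairing_le hβ hι (a := 1) (by simp) ω x ht
  · rw [abs_neg]
    linarith [abs_softmaxMean_le β (pairing p x + t • ω) ω]

theorem hasDominatedDeriv_neg_softmaxMean_mul_expNegLse (hβ : 0 < β)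
    (hp : Submodule.span ℝ (range p) = ⊤) (hι : ∀ i, p (ι i) = -p i) (ω : I → ℝ) :
    HasDominatedDeriv volume
      (fun t x => -softmaxMean β (pairing p x + t • ω) ω * expNegLse β (pairing p x + t • ω))
      (fun t x => lseCurvature β (pairing p x + t • ω) ω * expNegLse β (pairing p x + t • ω)) := by
  refine ⟨fun t => by fun_prop, fun t => by fun_prop,
    fun t x => hasDerivAt_neg_softmaxMean_mul_expNegLse hβ.ne' _ ω t, _,
    (integrable_exp_neg_norm (pairing_injective hp)).const_mul
      ((‖ω‖ + (1 + β) * ‖ω‖ ^ 2) * Real.exp ‖ω‖),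
    fun x t ht => ⟨norm_mul_expNegLse_pairing_le hβ hι ?_ ω x ht,
      norm_mul_expNegLse_pairing_le hβ hι ?_ ω x ht⟩⟩
  · rw [abs_neg]
    exact (abs_softmaxMean_le _ _ _).trans (le_add_of_nonneg_right (by positivity))
  · exact (abs_lseCurvature_le hβ.le _ _).trans (le_add_of_nonneg_left (norm_nonneg _))

/-- Prékopa's inequality for the log-concave function
`expNegLse β (pairing p x + t • ω) * sigmoid (⟪θ, x⟫ - s + η * t)` of `(t, x)`. -/
theorem integral_sigmoid_mul_le_sq (hβ : 0 < β) (hp : Submodule.span ℝ (range p) = ⊤)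
    (hι : ∀ i, p (ι i) = -p i) (ω : I → ℝ) (θ : E) (s η : ℝ) :
    (∫ x, (⟪θ, x⟫ - s).sigmoid ∂gibbsMeasure β p) *
      (∫ x, (lseCurvature β (pairing p x) ω * (⟪θ, x⟫ - s).sigmoid -
        2 * η * (softmaxMean β (pairing p x) ω * logisticDensity (⟪θ, x⟫ - s)) +
        η ^ 2 * logisticDensityDeriv (⟪θ, x⟫ - s)) ∂gibbsMeasure β p) ≤
      (∫ x, (η * logisticDensity (⟪θ, x⟫ - s) -
        softmaxMean β (pairing p x) ω * (⟪θ, x⟫ - s).sigmoid) ∂gibbsMeasure β p) ^ 2 := by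
  set B := 1 + |η| + η ^ 2
  have hbound {a c : ℝ} (ha : |a| ≤ B) (hc : |c| ≤ 1) : |a * c| ≤ B := by
    rw [abs_mul]
    exact (mul_le_of_le_one_right (abs_nonneg a) hc).trans ha
  have hη := abs_nonneg η
  have hη2 := sq_nonneg η
  have hB (t x) : |(⟪θ, x⟫ - s + η * t).sigmoid| ≤ B :=
    (abs_sigmoid_le_one _).trans (by simp only [B]; linarith)
  have hB' (t x) : |η * logisticDensity (⟪θ, x⟫ - s + η * t)| ≤ B :=
    hbound (by simp only [B]; linarith) (abs_logisticDensity_le_one _)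
  have hB'' (t x) : |η ^ 2 * logisticDensityDeriv (⟪θ, x⟫ - s + η * t)| ≤ B :=
    hbound (by rw [abs_of_nonneg hη2]; simp only [B]; linarith) (abs_logisticDensityDeriv_le_one _)
  have hu := hasDominatedDeriv_expNegLse hβ hp hι ω
  have hu' := hasDominatedDeriv_neg_softmaxMean_mul_expNegLse hβ hp hι ω
  have hmeas' (t) : Measurable fun x => η * logisticDensity (⟪θ, x⟫ - s + η * t) := by fun_prop
  have hfirst {ρ ρ' : ℝ → E → ℝ} (h : HasDominatedDeriv volume ρ ρ') :=
    h.bounded_mul (fun t => by fun_prop) hmeas'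
      (fun t x => hasDerivAt_sigmoid_add_mul (⟪θ, x⟫ - s) η t) hB hB'
  have hsecond := hu.bounded_mul hmeas' (fun t => by fun_prop)
    (fun t x => hasDerivAt_logisticDensity_add_mul (⟪θ, x⟫ - s) η t) hB' hB''
  have hpre := integral_mul_integral_deriv_deriv_le_sq (isPrekopaLeindler_volume (E := E))
    (hfirst hu) (hsecond.add (hfirst hu'))
    (fun t x => mul_nonneg (Real.sigmoid_nonneg _) (expNegLse_pos _ _).le)
    (fun t x y => sigmoid_mul_expNegLse_mul_le hβ.le ω θ s η t x y)
  simp only [integral_gibbsMeasure]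
  convert hpre using 3 <;>
  · ext x
    simp
    ring

end GibbsInequality

section RidgeIntegral

variable {E : Type*} [NormedAddCommGroup E] [InnerProductSpace ℝ E] [MeasurableSpace E]

/-- The integral of `g` against the ridge function `x ↦ f (⟪θ, x⟫ - s)`, with the offset `s` as
the last argument since it will be varied. -/
noncomputable def ridgeIntegral (μ : Measure E) (θ : E) (f : ℝ → ℝ) (g : E → ℝ) (s : ℝ) : ℝ :=
  ∫ x, g x * f (⟪θ, x⟫ - s) ∂μ

variable {μ : Measure E} {θ : E} {s : ℝ} {g : E → ℝ}

theorem ridgeIntegral_logisticDensity_neg :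
    ridgeIntegral μ (-θ) logisticDensity g (-s) = ridgeIntegral μ θ logisticDensity g s := by
  simp only [ridgeIntegral]
  congr with x
  rw [← logisticDensity_neg, inner_neg_left]
  ring_nf

theorem ridgeIntegral_logisticDensityDeriv_neg :
    ridgeIntegral μ (-θ) logisticDensityDeriv g (-s) =
      -ridgeIntegral μ θ logisticDensityDeriv g s := by
  simp only [ridgeIntegral, ← integral_neg]
  congr with x
  rw [← mul_neg, ← logisticDensityDeriv_neg, inner_neg_left]
  ring_nf

variable [BorelSpace E] [FiniteDimensional ℝ E] [IsFiniteMeasure μ]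

theorem integrable_mul_ridge {f : ℝ → ℝ} (hf : Continuous f) {A C : ℝ} (hfA : ∀ t, |f t| ≤ A)
    (hg : Measurable g) (hgC : ∀ x, |g x| ≤ C) (θ : E) (s : ℝ) :
    Integrable (fun x => g x * f (⟪θ, x⟫ - s)) μ := by
  refine .of_bound (by fun_prop) (C * A) (.of_forall fun x => ?_)
  rw [norm_mul]
  exact mul_le_mul (hgC x) (hfA _) (abs_nonneg _) ((abs_nonneg _).trans (hgC x))

theorem ridgeIntegral_sigmoid_neg (hg : Measurable g) {C : ℝ} (hgC : ∀ x, |g x| ≤ C) :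
    ridgeIntegral μ (-θ) Real.sigmoid g (-s) =
      ∫ x, g x ∂μ - ridgeIntegral μ θ Real.sigmoid g s := by
  simp only [ridgeIntegral]
  rw [← integral_sub (.of_bound hg.aestronglyMeasurable C (.of_forall hgC))
    (integrable_mul_ridge (by fun_prop) abs_sigmoid_le_one hg hgC θ s)]
  congr with x
  rw [← mul_one_sub, ← Real.sigmoid_neg, inner_neg_left]
  ring_nf

theorem ridgeIntegral_one_pos [μ.IsOpenPosMeasure] {f : ℝ → ℝ} (hf : Continuous f)
    (hpos : ∀ t, 0 < f t) {A : ℝ} (hfA : ∀ t, |f t| ≤ A) : 0 < ridgeIntegral μ θ f 1 s :=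
  integral_pos_of_integrable_nonneg_nonzero (x := 0) (by fun_prop)
    (integrable_mul_ridge hf hfA measurable_one (C := 1) (by simp) θ s)
    (fun x => by simpa using (hpos _).le) (by simpa using (hpos _).ne')

end RidgeIntegral

section GibbsQuadratic

variable {I : Type*} {ι : I → I} {E : Type*} [NormedAddCommGroup E] [InnerProductSpace ℝ E]
  {p : I → E} {β : ℝ} {ω : I → ℝ}

theorem pairing_neg_eq_comp (hι : ∀ i, p (ι i) = -p i) (x : E) :
    pairing p (-x) = pairing p x ∘ ι := by
  ext i
  simp [hι]

variable [Fintype I]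

theorem partitionFunction_comp_involutive (hinv : Function.Involutive ι) (y : I → ℝ) :
    partitionFunction β (y ∘ ι) = partitionFunction β y :=
  Equiv.sum_comp hinv.toPerm fun i => Real.exp (β * y i)

theorem softmaxMean_comp_involutive (hinv : Function.Involutive ι) (hω : ∀ i, ω (ι i) = -ω i)
    (y : I → ℝ) : softmaxMean β (y ∘ ι) ω = -softmaxMean β y ω := by
  have hreindex := Equiv.sum_comp hinv.toPerm fun i => softmax β y i * ω i
  simp only [Function.Involutive.coe_toPerm, hω, mul_neg, Finset.sum_neg_distrib] at hreindex
  rw [softmaxMean, softmaxMean, ← hreindex, neg_neg]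
  simp only [softmax, partitionFunction_comp_involutive hinv, Function.comp_apply]

variable [Nonempty I] [FiniteDimensional ℝ E] [MeasurableSpace E] [BorelSpace E]

theorem integral_softmaxMean_eq_zero (hinv : Function.Involutive ι) (hι : ∀ i, p (ι i) = -p i)
    (hω : ∀ i, ω (ι i) = -ω i) : ∫ x, softmaxMean β (pairing p x) ω ∂gibbsMeasure β p = 0 := by
  rw [integral_gibbsMeasure]
  have hodd := integral_neg_eq_self
    (fun x => expNegLse β (pairing p x) * softmaxMean β (pairing p x) ω) (volume : Measure E)
  simp only [pairing_neg_eq_comp hι, softmaxMean_comp_involutive hinv hω, expNegLse,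
    partitionFunction_comp_involutive hinv, mul_neg, integral_neg] at hodd ⊢
  linarith

theorem integral_lseCurvature_pairing (hβ : 0 < β) (hp : Submodule.span ℝ (range p) = ⊤)
    (hι : ∀ i, p (ι i) = -p i) (v : E) :
    ∫ x, lseCurvature β (pairing p x) (pairing p v) ∂gibbsMeasure β p = 0 := by
  have hderiv := (hasDominatedDeriv_neg_softmaxMean_mul_expNegLse hβ hp hι
    (pairing p v)).hasDerivAt_integral (Metric.mem_ball_self one_pos)
  have htrans (t : ℝ) :
      ∫ x, -softmaxMean β (pairing p x + t • pairing p v) (pairing p v) *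
        expNegLse β (pairing p x + t • pairing p v) =
      ∫ x, -softmaxMean β (pairing p x) (pairing p v) * expNegLse β (pairing p x) := by
    simpa only [map_add, map_smul] using integral_add_right_eq_self
      (fun x => -softmaxMean β (pairing p x) (pairing p v) * expNegLse β (pairing p x)) (t • v)
  simp only [htrans] at hderiv
  simpa [integral_gibbsMeasure, mul_comm] using hderiv.unique (hasDerivAt_const 0 _)

theorem isOpenPosMeasure_gibbsMeasure : (gibbsMeasure β p).IsOpenPosMeasure :=
  (withDensity_absolutelyContinuous' (by fun_prop)
    (.of_forall fun x => by simp [expNegLse_pos])).isOpenPosMeasure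

theorem ridgeIntegral_sigmoid_one_mul_le_sq (hβ : 0 < β) (hp : Submodule.span ℝ (range p) = ⊤)
    (hι : ∀ i, p (ι i) = -p i) (ω : I → ℝ) (θ : E) (s η : ℝ) :
    ridgeIntegral (gibbsMeasure β p) θ Real.sigmoid 1 s *
      (ridgeIntegral (gibbsMeasure β p) θ Real.sigmoid
          (fun x => lseCurvature β (pairing p x) ω) s -
        2 * η * ridgeIntegral (gibbsMeasure β p) θ logisticDensity
          (fun x => softmaxMean β (pairing p x) ω) s +
        η ^ 2 * ridgeIntegral (gibbsMeasure β p) θ logisticDensityDeriv 1 s) ≤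
      (η * ridgeIntegral (gibbsMeasure β p) θ logisticDensity 1 s -
        ridgeIntegral (gibbsMeasure β p) θ Real.sigmoid
          (fun x => softmaxMean β (pairing p x) ω) s) ^ 2 := by
  have := isFiniteMeasure_gibbsMeasure hβ hp hι
  have hmean (x : E) := abs_softmaxMean_le β (pairing p x) ω
  have hcurv (x : E) := abs_lseCurvature_le hβ.le (pairing p x) ω
  have hone (x : E) : |(1 : E → ℝ) x| ≤ 1 := by simp
  have hprekopa := integral_sigmoid_mul_le_sq hβ hp hι ω θ s η
  have hS1 := integrable_mul_ridge (μ := gibbsMeasure β p) (by fun_prop) abs_sigmoid_le_one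
    (by fun_prop) hmean θ s
  have hS2 := integrable_mul_ridge (μ := gibbsMeasure β p) (by fun_prop) abs_sigmoid_le_one
    (by fun_prop) hcurv θ s
  have hT0 := integrable_mul_ridge (μ := gibbsMeasure β p) (by fun_prop)
    abs_logisticDensity_le_one (by fun_prop) hone θ s
  have hT1 := integrable_mul_ridge (μ := gibbsMeasure β p) (by fun_prop)
    abs_logisticDensity_le_one (by fun_prop) hmean θ s
  have hT'0 := integrable_mul_ridge (μ := gibbsMeasure β p) (by fun_prop)
    abs_logisticDensityDeriv_le_one (by fun_prop) hone θ s
  simp only [Pi.one_apply, one_mul] at hT0 hT'0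
  have hS2T1 : Integrable (fun x => lseCurvature β (pairing p x) ω * (⟪θ, x⟫ - s).sigmoid -
      2 * η * (softmaxMean β (pairing p x) ω * logisticDensity (⟪θ, x⟫ - s)))
      (gibbsMeasure β p) := hS2.sub (hT1.const_mul _)
  rw [integral_add hS2T1 (hT'0.const_mul _),
    integral_sub hS2 (hT1.const_mul _), integral_sub (hT0.const_mul _) hS1] at hprekopa
  simpa only [integral_const_mul, ridgeIntegral, Pi.one_apply, one_mul] using hprekopa

/-- If two quadratics with sum `Q` are dominated by multiples of the square `(η * R - N) ^ 2`, then
they are controlled near its zero `η = N / R`. -/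
theorem quadratic_le_of_forall_mul_le_sq {A B Q y N R G κ : ℝ} (hA : 0 < A) (hB : 0 < B)
    (hR : 0 < R) (hleA : ∀ η, A * (y - 2 * η * G + η ^ 2 * κ) ≤ (η * R - N) ^ 2)
    (hleB : ∀ η, B * (Q - (y - 2 * η * G + η ^ 2 * κ)) ≤ (η * R - N) ^ 2) (δ : ℝ) :
    A * (Q * R + 2 * δ * (N * κ - G * R) + δ ^ 2 * κ * R) ≤ δ ^ 2 * R ^ 3 := by
  obtain ⟨η, rfl⟩ : ∃ η, N = η * R := ⟨N / R, by field_simp⟩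
  have hQ : Q ≤ y - 2 * η * G + η ^ 2 * κ := by
    have := hleB η
    rw [sub_self, zero_pow two_ne_zero] at this
    linarith [nonpos_of_mul_nonpos_right this hB]
  have hδ := hleA (η + δ)
  have hmono : A * (Q + 2 * δ * (η * κ - G) + δ ^ 2 * κ) ≤ (δ * R) ^ 2 := by
    nlinarith [mul_le_mul_of_nonneg_left hQ hA.le]
  nlinarith [mul_le_mul_of_nonneg_right hmono hR.le]

theorem gibbs_quadratic_le (hβ : 0 < β) (hp : Submodule.span ℝ (range p) = ⊤)
    (hinv : Function.Involutive ι) (hι : ∀ i, p (ι i) = -p i) (hω : ∀ i, ω (ι i) = -ω i)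
    (θ : E) (s δ : ℝ) :
    ridgeIntegral (gibbsMeasure β p) θ Real.sigmoid 1 s *
      ((∫ x, lseCurvature β (pairing p x) ω ∂gibbsMeasure β p) *
          ridgeIntegral (gibbsMeasure β p) θ logisticDensity 1 s +
        2 * δ * (ridgeIntegral (gibbsMeasure β p) θ Real.sigmoid
            (fun x => softmaxMean β (pairing p x) ω) s *
          ridgeIntegral (gibbsMeasure β p) θ logisticDensityDeriv 1 s -
          ridgeIntegral (gibbsMeasure β p) θ logisticDensity
            (fun x => softmaxMean β (pairing p x) ω) s *
          ridgeIntegral (gibbsMeasure β p) θ logisticDensity 1 s) +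
        δ ^ 2 * ridgeIntegral (gibbsMeasure β p) θ logisticDensityDeriv 1 s *
          ridgeIntegral (gibbsMeasure β p) θ logisticDensity 1 s) ≤
      δ ^ 2 * ridgeIntegral (gibbsMeasure β p) θ logisticDensity 1 s ^ 3 := by
  have := isFiniteMeasure_gibbsMeasure hβ hp hι
  have := isOpenPosMeasure_gibbsMeasure (β := β) (p := p)
  have hreflect := ridgeIntegral_sigmoid_one_mul_le_sq hβ hp hι ω (-θ) (-s)
  simp only [ridgeIntegral_logisticDensity_neg, ridgeIntegral_logisticDensityDeriv_neg,
    ridgeIntegral_sigmoid_neg (by fun_prop) fun x => abs_softmaxMean_le β (pairing p x) ω,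
    ridgeIntegral_sigmoid_neg (by fun_prop) fun x => abs_lseCurvature_le hβ.le (pairing p x) ω,
    integral_softmaxMean_eq_zero hinv hι hω] at hreflect
  refine quadratic_le_of_forall_mul_le_sq
    (B := ridgeIntegral (gibbsMeasure β p) (-θ) Real.sigmoid 1 (-s))
    (ridgeIntegral_one_pos (by fun_prop) Real.sigmoid_pos abs_sigmoid_le_one)
    (ridgeIntegral_one_pos (by fun_prop) Real.sigmoid_pos abs_sigmoid_le_one)
    (ridgeIntegral_one_pos (by fun_prop) logisticDensity_pos abs_logisticDensity_le_one)
    (fun η => ridgeIntegral_sigmoid_one_mul_le_sq hβ hp hι ω θ s η) (fun η => ?_) δ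
  refine (Eq.trans_le ?_ (hreflect (-η))).trans_eq ?_ <;> ring

theorem integral_lseCurvature_nonpos (hβ : 0 < β) (hp : Submodule.span ℝ (range p) = ⊤)
    (hinv : Function.Involutive ι) (hι : ∀ i, p (ι i) = -p i) (hω : ∀ i, ω (ι i) = -ω i) :
    ∫ x, lseCurvature β (pairing p x) ω ∂gibbsMeasure β p ≤ 0 := by
  have := isFiniteMeasure_gibbsMeasure hβ hp hι
  have := isOpenPosMeasure_gibbsMeasure (β := β) (p := p)
  have hle := gibbs_quadratic_le hβ hp hinv hι hω 0 0 0
  simp only [mul_zero, zero_mul, add_zero, ne_eq, OfNat.ofNat_ne_zero, not_false_eq_true,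
    zero_pow] at hle
  have hS := ridgeIntegral_one_pos (μ := gibbsMeasure β p) (θ := 0) (s := 0) (by fun_prop)
    Real.sigmoid_pos abs_sigmoid_le_one
  have hT := ridgeIntegral_one_pos (μ := gibbsMeasure β p) (θ := 0) (s := 0) (by fun_prop)
    logisticDensity_pos abs_logisticDensity_le_one
  exact nonpos_of_mul_nonpos_left (nonpos_of_mul_nonpos_right hle hS) hT

end GibbsQuadratic

section Polytope

variable {E : Type*} [AddCommGroup E] [Module ℝ E]

theorem eq_of_sum_smul_mem_extremePoints {J : Type*} {A : Set E} (hA : Convex ℝ A) {s : Finset J}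
    {w : J → ℝ} {z : J → E} (hw : ∀ l ∈ s, 0 ≤ w l) (hsum : ∑ l ∈ s, w l = 1)
    (hz : ∀ l ∈ s, z l ∈ A) (hx : ∑ l ∈ s, w l • z l ∈ extremePoints ℝ A) {k : J} (hk : k ∈ s)
    (hwk : 0 < w k) : z k = ∑ l ∈ s, w l • z l := by
  classical
  have hw' : ∀ l ∈ s.erase k, 0 ≤ w l := fun l hl => hw l (Finset.mem_of_mem_erase hl)
  have hrest : w k + ∑ l ∈ s.erase k, w l = 1 := by rw [Finset.add_sum_erase s w hk, hsum]
  have hsplit := Finset.add_sum_erase s (fun l => w l • z l) hk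
  rcases (Finset.sum_nonneg hw').eq_or_lt with hzero | hpos
  · have hvanish : ∑ l ∈ s.erase k, w l • z l = 0 := Finset.sum_eq_zero fun l hl => by
      rw [(Finset.sum_eq_zero_iff_of_nonneg hw').1 hzero.symm l hl, zero_smul]
    rw [← hsplit, hvanish, add_zero, show w k = 1 by rw [← hrest, ← hzero, add_zero], one_smul]
  · refine hx.2 (hz k hk) (hA.centerMass_mem hw' hpos fun l hl => hz l (Finset.mem_of_mem_erase hl))
      ⟨w k, ∑ l ∈ s.erase k, w l, hwk, hpos, hrest, ?_⟩
    rw [Finset.centerMass, smul_inv_smul₀ hpos.ne', hsplit]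

variable {I : Type*} {p : I → E}

theorem sub_notMem_span_singleton (hinj : Function.Injective p)
    (hvert : ∀ i, p i ∈ extremePoints ℝ (convexHull ℝ (range p))) {i j k : I} (hij : i ≠ j)
    (hik : i ≠ k) (hjk : j ≠ k) : p j - p i ∉ ℝ ∙ (p k - p i) := by
  have hmem (l : I) : p l ∈ convexHull ℝ (range p) := subset_convexHull ℝ _ (mem_range_self l)
  have hnot {a b c : I} (hab : a ≠ b) (hbc : b ≠ c) : ¬Wbtw ℝ (p a) (p b) (p c) := fun h => by
    rcases (mem_extremePoints_iff_forall_segment.1 (hvert b)).2 _ (hmem a) _ (hmem c)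
      (mem_segment_iff_wbtw.2 h) with h | h
    · exact hab (hinj h)
    · exact hbc (hinj h).symm
  intro h
  obtain ⟨r, hr⟩ := Submodule.mem_span_singleton.1 h
  have hcol : Collinear ℝ {p i, p j, p k} := by
    rw [collinear_iff_of_mem (mem_insert _ _)]
    refine ⟨p k - p i, ?_⟩
    rintro _ (rfl | rfl | rfl)
    · exact ⟨0, by simp⟩
    · exact ⟨r, by simp [hr]⟩
    · exact ⟨1, by simp⟩
  rcases hcol.wbtw_or_wbtw_or_wbtw with h | h | h
  · exact hnot hij hjk h
  · exact hnot hjk hik.symm h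
  · exact hnot hik.symm hij h

variable [Fintype I]

theorem exists_weights_of_mem_convexHull {x : E} (hx : x ∈ convexHull ℝ (range p)) :
    ∃ w : I → ℝ, (∀ k, 0 ≤ w k) ∧ ∑ k, w k = 1 ∧ ∑ k, w k • p k = x := by
  classical
  have himage : range p = Fintype.linearCombination ℝ p '' range fun i => Pi.single i 1 := by
    rw [← range_comp]
    congr 1
    ext i
    simp [Fintype.linearCombination_apply_single]
  rw [himage, ← LinearMap.image_convexHull, convexHull_rangle_single_eq_stdSimplex] at hx
  obtain ⟨w, ⟨hw, hsum⟩, rfl⟩ := hx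
  exact ⟨w, hw, hsum, rfl⟩

/-- The segment from `p i` to `p j` meets the hull of the remaining points: one of its points is a
convex combination of the `p k` in which some `k ≠ i, j` participates. For the vertices of a
polytope this happens exactly when the segment is not an edge. -/
def HasTransversal (p : I → E) (i j : I) : Prop :=
  ∃ w : I → ℝ, (∀ k, 0 ≤ w k) ∧ ∑ k, w k = 1 ∧ ∑ k, w k • p k ∈ segment ℝ (p i) (p j) ∧
    ∃ k, k ≠ i ∧ k ≠ j ∧ 0 < w k

theorem sum_smul_mem_segment {w : I → ℝ} (hw : ∀ k, 0 ≤ w k) (hsum : ∑ k, w k = 1) {i j : I}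
    (hzero : ∀ k, k ≠ i → k ≠ j → w k = 0) : ∑ k, w k • p k ∈ segment ℝ (p i) (p j) := by
  classical
  rw [← Finset.sum_filter_of_ne (p := fun k => w k ≠ 0) fun k _ hk => left_ne_zero_of_smul hk]
  refine (convex_segment _ _).sum_mem (fun k _ => hw k) ?_ fun k hk => ?_
  · rw [Finset.sum_filter_of_ne fun k _ hk => hk, hsum]
  · rcases eq_or_ne k i with rfl | hki
    · exact left_mem_segment ℝ _ _
    · rcases eq_or_ne k j with rfl | hkj
      · exact right_mem_segment ℝ _ _
      · exact absurd (hzero k hki hkj) (Finset.mem_filter.1 hk).2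

theorem hasTransversal_of_not_isExtreme {i j : I}
    (hij : ¬IsExtreme ℝ (convexHull ℝ (range p)) (segment ℝ (p i) (p j))) :
    HasTransversal p i j := by
  have hmem (l : I) : p l ∈ convexHull ℝ (range p) := subset_convexHull ℝ _ (mem_range_self l)
  rw [isExtreme_iff, not_and] at hij
  have hleft := hij ((convex_convexHull ℝ _).segment_subset (hmem i) (hmem j))
  push Not at hleft
  obtain ⟨x, hx, y, hy, z, hz, hzxy, hxz⟩ := hleft
  obtain ⟨a, ha, hasum, rfl⟩ := exists_weights_of_mem_convexHull hx
  obtain ⟨b, hb, hbsum, rfl⟩ := exists_weights_of_mem_convexHull hy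
  obtain ⟨s, t, hs, ht, hst, rfl⟩ := hzxy
  obtain ⟨k, hki, hkj, hk⟩ : ∃ k, k ≠ i ∧ k ≠ j ∧ a k ≠ 0 := by
    by_contra! h
    exact hxz (sum_smul_mem_segment ha hasum h)
  refine ⟨fun l => s * a l + t * b l,
    fun l => add_nonneg (mul_nonneg hs.le (ha l)) (mul_nonneg ht.le (hb l)), ?_, ?_, k, hki, hkj,
    add_pos_of_pos_of_nonneg (mul_pos hs ((ha k).lt_of_ne' hk)) (mul_nonneg ht.le (hb k))⟩
  · rw [Finset.sum_add_distrib, ← Finset.mul_sum, ← Finset.mul_sum, hasum, hbsum, mul_one,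
      mul_one, hst]
  · simpa only [add_smul, mul_smul, Finset.sum_add_distrib, ← Finset.smul_sum] using hz

end Polytope

section VertexFigure

variable {I : Type*} {E : Type*} [NormedAddCommGroup E] [NormedSpace ℝ E] {p : I → E}

theorem exists_forall_lt_of_mem_extremePoints [Finite I] (hinj : Function.Injective p) {i : I}
    (hi : p i ∈ extremePoints ℝ (convexHull ℝ (range p))) :
    ∃ f : StrongDual ℝ E, ∀ j ≠ i, f (p j) < f (p i) := by
  have hconvex : Convex ℝ (convexHull ℝ (range p) \ {p i}) :=
    ((convex_convexHull ℝ _).mem_extremePoints_iff_convex_sdiff.1 hi).2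
  have hothers : p '' {i}ᶜ ⊆ convexHull ℝ (range p) \ {p i} := by
    rintro _ ⟨j, hj, rfl⟩
    exact ⟨subset_convexHull ℝ _ (mem_range_self j), fun h => hj (hinj h)⟩
  have hi' : p i ∉ convexHull ℝ (p '' {i}ᶜ) := fun h => (convexHull_min hothers hconvex h).2 rfl
  obtain ⟨f, u, hlt, hu⟩ := geometric_hahn_banach_closed_point (convex_convexHull ℝ _)
    ((toFinite _).isCompact_convexHull ℝ).isClosed hi'
  exact ⟨f, fun j hj => (hlt _ (subset_convexHull ℝ _ (mem_image_of_mem p hj))).trans hu⟩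

/-- The intersection of the ray from `p i` through `p j`, translated to start at the origin, with
the hyperplane `f = -1`. If `f` is maximal exactly at the vertex `p i`, then the hull of these
points is the vertex figure of `p i`. -/
noncomputable def vertexFigure (f : StrongDual ℝ E) (p : I → E) (i j : I) : E :=
  (f (p i) - f (p j))⁻¹ • (p j - p i)

variable {f : StrongDual ℝ E} {i : I}

theorem smul_vertexFigure {j : I} (hj : f (p j) < f (p i)) :
    (f (p i) - f (p j)) • vertexFigure f p i j = p j - p i :=
  smul_inv_smul₀ (sub_pos.2 hj).ne' _

theorem apply_vertexFigure {j : I} (hj : f (p j) < f (p i)) : f (vertexFigure f p i j) = -1 := by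
  have := sub_pos.2 hj
  simp only [vertexFigure, map_smul, map_sub, smul_eq_mul]
  field_simp
  ring

variable [Fintype I]

theorem sum_mul_smul_vertexFigure [DecidableEq I] (hf : ∀ j ≠ i, f (p j) < f (p i)) {w : I → ℝ}
    (hsum : ∑ k, w k = 1) :
    ∑ k ∈ Finset.univ.erase i, (w k * (f (p i) - f (p k))) • vertexFigure f p i k =
      ∑ k, w k • p k - p i :=
  calc
    _ = ∑ k ∈ Finset.univ.erase i, w k • (p k - p i) := Finset.sum_congr rfl fun k hk => by
      rw [mul_smul, smul_vertexFigure (hf k (Finset.ne_of_mem_erase hk))]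
    _ = ∑ k, w k • (p k - p i) := Finset.sum_erase _ (by rw [sub_self, smul_zero])
    _ = ∑ k, w k • p k - p i := by
      simp only [smul_sub, Finset.sum_sub_distrib, ← Finset.sum_smul, hsum, one_smul]

theorem vertexFigure_eq_of_hasTransversal (hf : ∀ j ≠ i, f (p j) < f (p i)) {j : I} (hj : j ≠ i)
    (hext : vertexFigure f p i j ∈
      extremePoints ℝ (convexHull ℝ (vertexFigure f p i '' {i}ᶜ))) (h : HasTransversal p i j) :
    ∃ k, k ≠ i ∧ k ≠ j ∧ vertexFigure f p i k = vertexFigure f p i j := by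
  classical
  obtain ⟨w, hw, hsum, hseg, k, hki, hkj, hk⟩ := h
  rw [segment_eq_image'] at hseg
  obtain ⟨t, -, ht⟩ := hseg
  have hg (l : I) (hl : l ∈ Finset.univ.erase i) : 0 < f (p i) - f (p l) :=
    sub_pos.2 (hf l (Finset.ne_of_mem_erase hl))
  have hki' : k ∈ Finset.univ.erase i := Finset.mem_erase.2 ⟨hki, Finset.mem_univ k⟩
  set r := t * (f (p i) - f (p j)) with hr
  have hcomb : ∑ l ∈ Finset.univ.erase i, (w l * (f (p i) - f (p l))) • vertexFigure f p i l =
      r • vertexFigure f p i j := by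
    rw [sum_mul_smul_vertexFigure hf hsum, ← ht, add_sub_cancel_left, hr, mul_smul,
      smul_vertexFigure (hf j hj)]
  have hweights : ∑ l ∈ Finset.univ.erase i, w l * (f (p i) - f (p l)) = r := by
    have := congrArg f hcomb
    rw [map_sum, map_smul, apply_vertexFigure (hf j hj), Finset.sum_congr rfl fun l hl => by
      rw [map_smul, apply_vertexFigure (hf l (Finset.ne_of_mem_erase hl))]] at this
    simpa using this
  have hnonneg (l : I) (hl : l ∈ Finset.univ.erase i) : 0 ≤ w l * (f (p i) - f (p l)) :=
    mul_nonneg (hw l) (hg l hl).le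
  have hkpos : 0 < w k * (f (p i) - f (p k)) := mul_pos hk (hg k hki')
  have hrpos : 0 < r := hweights ▸ hkpos.trans_le (Finset.single_le_sum hnonneg hki')
  have hmean : ∑ l ∈ Finset.univ.erase i, (r⁻¹ * (w l * (f (p i) - f (p l)))) •
      vertexFigure f p i l = vertexFigure f p i j := by
    simp only [mul_smul r⁻¹, ← Finset.smul_sum, hcomb, inv_smul_smul₀ hrpos.ne']
  refine ⟨k, hki, hkj, (eq_of_sum_smul_mem_extremePoints (convex_convexHull ℝ _)
    (fun l hl => mul_nonneg (inv_nonneg.2 hrpos.le) (hnonneg l hl)) ?_ (fun l hl => ?_)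
    (hmean.symm ▸ hext) hki' (mul_pos (inv_pos.2 hrpos) hkpos)).trans hmean⟩
  · rw [← Finset.mul_sum, hweights, inv_mul_cancel₀ hrpos.ne']
  · exact subset_convexHull ℝ _ (mem_image_of_mem _ (Finset.ne_of_mem_erase hl))

theorem not_hasTransversal_of_mem_extremePoints (hinj : Function.Injective p)
    (hvert : ∀ i, p i ∈ extremePoints ℝ (convexHull ℝ (range p)))
    (hf : ∀ j ≠ i, f (p j) < f (p i)) {j : I} (hj : j ≠ i)
    (hext : vertexFigure f p i j ∈
      extremePoints ℝ (convexHull ℝ (vertexFigure f p i '' {i}ᶜ))) : ¬HasTransversal p i j := by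
  intro h
  obtain ⟨k, hki, hkj, hk⟩ := vertexFigure_eq_of_hasTransversal hf hj hext h
  refine sub_notMem_span_singleton hinj hvert hj.symm hki.symm hkj.symm
    (Submodule.mem_span_singleton.2 ⟨(f (p i) - f (p j)) / (f (p i) - f (p k)), ?_⟩)
  rw [← smul_vertexFigure (hf j hj), ← smul_vertexFigure (hf k hki), hk, smul_smul,
    div_mul_cancel₀ _ (sub_pos.2 (hf k hki)).ne']

/-- Every extreme point of the vertex figure comes from an edge at `p i`. -/
theorem apply_le_of_forall_not_hasTransversal (hinj : Function.Injective p)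
    (hvert : ∀ i, p i ∈ extremePoints ℝ (convexHull ℝ (range p))) (c : StrongDual ℝ E)
    (hc : ∀ j ≠ i, ¬HasTransversal p i j → c (p j) ≤ c (p i)) (k : I) : c (p k) ≤ c (p i) := by
  obtain ⟨f, hf⟩ := exists_forall_lt_of_mem_extremePoints hinj (hvert i)
  rcases eq_or_ne k i with rfl | hk
  · exact le_rfl
  have hhalf : convexHull ℝ (vertexFigure f p i '' {i}ᶜ) ⊆ {y | c y ≤ 0} := by
    refine (closure_convexHull_extremePoints ((toFinite _).isCompact_convexHull ℝ)
      (convex_convexHull ℝ _)).symm.subset.trans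
      (closure_minimal (convexHull_min ?_ (convex_halfSpace_le c.isLinear 0))
        (isClosed_le (by fun_prop) (by fun_prop)))
    intro y hy
    obtain ⟨j, hj, rfl⟩ := extremePoints_convexHull_subset hy
    have hcj := hc j hj (not_hasTransversal_of_mem_extremePoints hinj hvert hf hj hy)
    rw [mem_ofPred_eq, vertexFigure, map_smul, map_sub, smul_eq_mul]
    exact mul_nonpos_of_nonneg_of_nonpos (inv_nonneg.2 (sub_pos.2 (hf j hj)).le) (sub_nonpos.2 hcj)
  have hck : c (vertexFigure f p i k) ≤ 0 :=
    hhalf (subset_convexHull ℝ _ (mem_image_of_mem _ hk))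
  rw [← sub_nonpos, ← map_sub, ← smul_vertexFigure (hf k hk), map_smul, smul_eq_mul]
  exact mul_nonpos_of_nonneg_of_nonpos (sub_pos.2 (hf k hk)).le hck

end VertexFigure

section Decay

variable {E : Type*} [NormedAddCommGroup E] [InnerProductSpace ℝ E]

theorem exists_inner_eq_one_and_inner_eq_zero {a b : E} (hab : a ∉ ℝ ∙ b) :
    ∃ u, ⟪a, u⟫ = 1 ∧ ⟪b, u⟫ = 0 := by
  have hab' : a ∉ (ℝ ∙ b)ᗮᗮ := by rwa [Submodule.orthogonal_orthogonal]
  obtain ⟨v, hv, hav⟩ : ∃ v ∈ (ℝ ∙ b)ᗮ, ⟪a, v⟫ ≠ 0 := by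
    by_contra! h
    exact hab' ((Submodule.mem_orthogonal' _ _).2 h)
  refine ⟨⟪a, v⟫⁻¹ • v, ?_, ?_⟩
  · rw [real_inner_smul_right, inv_mul_cancel₀ hav]
  · rw [real_inner_smul_right, Submodule.mem_orthogonal_singleton_iff_inner_right.1 hv, mul_zero]

theorem mul_norm_le_add_abs {c C r : ℝ} {u x : E} (hc : 0 ≤ c) (hu : c * ‖u‖ ≤ 1) (hcC : c ≤ C)
    (hr : |r| ≤ 1) (t : ℝ) : c * ‖x‖ ≤ C * ‖x + (t * r) • u‖ + |t| := by
  have hnorm : ‖x‖ ≤ ‖x + (t * r) • u‖ + |t| * ‖u‖ :=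
    calc ‖x‖ = ‖x + (t * r) • u - (t * r) • u‖ := by rw [add_sub_cancel_right]
      _ ≤ ‖x + (t * r) • u‖ + ‖(t * r) • u‖ := norm_sub_le _ _
      _ ≤ ‖x + (t * r) • u‖ + |t| * ‖u‖ := by
        rw [norm_smul, Real.norm_eq_abs, abs_mul]
        gcongr
        exact mul_le_of_le_one_right (abs_nonneg t) hr
  calc c * ‖x‖ ≤ c * ‖x + (t * r) • u‖ + |t| * (c * ‖u‖) := by nlinarith
    _ ≤ C * ‖x + (t * r) • u‖ + |t| := by
      gcongr
      exact mul_le_of_le_one_right (abs_nonneg t) hu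

variable [FiniteDimensional ℝ E] [MeasurableSpace E] [BorelSpace E]

theorem ae_inner_ne_zero {b : E} (hb : b ≠ 0) : ∀ᵐ x, ⟪b, x⟫ ≠ 0 := by
  have hproper : (ℝ ∙ b)ᗮ ≠ ⊤ := fun h => hb (by
    simpa [Submodule.orthogonal_eq_top_iff, Submodule.span_singleton_eq_bot] using h)
  have hnull := Measure.addHaar_submodule (volume : Measure E) _ hproper
  filter_upwards [measure_eq_zero_iff_ae_notMem.1 hnull] with x hx h
  exact hx (Submodule.mem_orthogonal_singleton_iff_inner_right.2 h)

theorem mul_integral_eq_integral_transvection {a u : E} (hau : ⟪a, u⟫ = 1) {β : ℝ} (hβ : 0 < β)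
    {F : E → ℝ} (hF : Continuous F) :
    β * ∫ x, F x = ∫ x, F (x + (⟪a, x⟫ * (β⁻¹ - 1)) • u) := by
  set S : E →ₗ[ℝ] E := LinearMap.transvection (innerₛₗ ℝ a) ((β⁻¹ - 1) • u) with hS
  have hdet : LinearMap.det S = β⁻¹ := by
    rw [hS, LinearMap.transvection.det, innerₛₗ_apply_apply, real_inner_smul_right, hau]
    ring
  have hmap := Measure.map_linearMap_addHaar_eq_smul_addHaar (volume : Measure E)
    (f := S) (by rw [hdet]; positivity)
  have hSx (x : E) : S x = x + (⟪a, x⟫ * (β⁻¹ - 1)) • u := by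
    rw [hS, LinearMap.transvection.apply, innerₛₗ_apply_apply, smul_smul]
  simp_rw [← hSx]
  rw [← integral_map (LinearMap.continuous_of_finiteDimensional S).aemeasurable
    hF.aestronglyMeasurable, hmap, integral_smul_measure, hdet, inv_inv, abs_of_pos hβ,
    ENNReal.toReal_ofReal hβ.le, smul_eq_mul]

theorem mul_integral_exp_neg_abs_add_abs_eq {a b u : E} (hau : ⟪a, u⟫ = 1) (hbu : ⟪b, u⟫ = 0)
    (c : ℝ) {β : ℝ} (hβ : 0 < β) :
    β * ∫ x, Real.exp (-(c * ‖x‖)) * Real.exp (-(β * (|⟪a, x⟫| + |⟪b, x⟫|))) =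
      ∫ x, Real.exp
        (-(c * ‖x + (⟪a, x⟫ * (β⁻¹ - 1)) • u‖ + |⟪a, x⟫| + β * |⟪b, x⟫|)) := by
  rw [mul_integral_eq_integral_transvection hau hβ (by fun_prop)]
  refine integral_congr_ae (.of_forall fun x => ?_)
  simp only [inner_add_right, real_inner_smul_right, hau, hbu, ← Real.exp_add]
  congr 1
  have : ⟪a, x⟫ + ⟪a, x⟫ * (β⁻¹ - 1) * 1 = β⁻¹ * ⟪a, x⟫ := by ring
  rw [this, mul_zero, add_zero, abs_mul, abs_of_pos (inv_pos.2 hβ)]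
  field_simp
  ring

/-- The integrand concentrates on the codimension two subspace orthogonal to `a` and `b`, so its
integral is of order `β⁻²`. -/
theorem tendsto_mul_integral_exp_neg_abs_add_abs {a b : E} (hb : b ≠ 0) (hab : a ∉ ℝ ∙ b) {c : ℝ}
    (hc : 0 < c) :
    Tendsto (fun β : ℝ => β * ∫ x, Real.exp (-(c * ‖x‖)) * Real.exp (-(β * (|⟪a, x⟫| + |⟪b, x⟫|))))
      atTop (𝓝 0) := by
  obtain ⟨u, hau, hbu⟩ := exists_inner_eq_one_and_inner_eq_zero hab
  have hu : 0 < ‖u‖ := norm_pos_iff.2 fun h => by simp [h] at hau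
  refine Tendsto.congr' ((eventually_gt_atTop 0).mono fun β hβ =>
    (mul_integral_exp_neg_abs_add_abs_eq hau hbu c hβ).symm) ?_
  rw [← integral_zero E ℝ (μ := volume)]
  set m := min c ‖u‖⁻¹
  have hm : 0 < m := lt_min hc (inv_pos.2 hu)
  have hmu : m * ‖u‖ ≤ 1 := by
    rw [← le_div_iff₀ hu, one_div]
    exact min_le_right _ _
  refine tendsto_integral_filter_of_dominated_convergence (fun x => Real.exp (-(m * ‖x‖)))
    (.of_forall fun β => by fun_prop) ?_ (integrable_exp_neg_mul_norm hm) ?_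
  · filter_upwards [eventually_ge_atTop 1] with β hβ
    refine .of_forall fun x => ?_
    have hβ' : |β⁻¹ - 1| ≤ 1 := by
      rw [abs_le]
      constructor <;> linarith [inv_le_one_of_one_le₀ hβ, inv_pos.2 (zero_lt_one.trans_le hβ)]
    rw [Real.norm_of_nonneg (Real.exp_pos _).le, Real.exp_le_exp, neg_le_neg_iff]
    exact (mul_norm_le_add_abs hm.le hmu (min_le_left _ _) hβ' ⟪a, x⟫).trans
      (le_add_of_nonneg_right (by positivity))
  · filter_upwards [ae_inner_ne_zero hb] with x hx
    refine Real.tendsto_exp_neg_atTop_nhds_zero.comp (tendsto_atTop_mono (fun β => ?_)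
      (tendsto_id.atTop_mul_const (abs_pos.2 hx)))
    exact le_add_of_nonneg_left (by positivity)

end Decay

section NonEdge

variable {I : Type*} [Fintype I]

theorem mul_abs_sub_add_abs_sub_le {w y : I → ℝ} (hw : ∀ k, 0 ≤ w k) (hsum : ∑ k, w k = 1)
    {i j k l : I} (hmean : min (y i) (y j) ≤ ∑ m, w m * y m) (hl : ∀ m, y m ≤ y l) :
    w k / 2 * |y j - y i| + w k / 2 * |y k - y i| ≤ y l - min (y i) (y j) := by
  have hwk1 : w k ≤ 1 := hsum ▸ Finset.single_le_sum (fun m _ => hw m) (Finset.mem_univ k)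
  have hwk : w k * (y l - y k) ≤ y l - min (y i) (y j) := by
    have hgap : ∑ m, w m * (y l - y m) = y l - ∑ m, w m * y m := by
      simp only [mul_sub, Finset.sum_sub_distrib, ← Finset.sum_mul, hsum, one_mul]
    have := Finset.single_le_sum (f := fun m => w m * (y l - y m))
      (fun m _ => mul_nonneg (hw m) (sub_nonneg.2 (hl m))) (Finset.mem_univ k)
    linarith
  have hD : 0 ≤ y l - min (y i) (y j) := sub_nonneg.2 ((min_le_left _ _).trans (hl i))
  have hshrink {t : ℝ} (ht : t ≤ y l - min (y i) (y j)) : w k * t ≤ y l - min (y i) (y j) :=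
    (mul_le_mul_of_nonneg_left ht (hw k)).trans (mul_le_of_le_one_left hD hwk1)
  have hji : w k * |y j - y i| ≤ y l - min (y i) (y j) := by
    refine hshrink (abs_le.2 ⟨?_, ?_⟩) <;>
      linarith [hl i, hl j, min_le_left (y i) (y j), min_le_right (y i) (y j)]
  have hki : w k * |y k - y i| ≤ y l - min (y i) (y j) := by
    rcases abs_cases (y k - y i) with ⟨h, -⟩ | ⟨h, -⟩ <;> rw [h]
    · exact hshrink (sub_le_sub (hl k) (min_le_left _ _))
    · exact (mul_le_mul_of_nonneg_left (by linarith [hl i]) (hw k)).trans hwk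
  linarith

theorem softmax_le_exp (β : ℝ) (y : I → ℝ) (i j : I) :
    softmax β y i ≤ Real.exp (-(β * (y j - y i))) := by
  have hle : Real.exp (β * y j) ≤ partitionFunction β y :=
    Finset.single_le_sum (f := fun l => Real.exp (β * y l)) (fun _ _ => (Real.exp_pos _).le)
      (Finset.mem_univ j)
  calc softmax β y i ≤ Real.exp (β * y i) / Real.exp (β * y j) := by unfold softmax; gcongr
    _ = Real.exp (-(β * (y j - y i))) := by
      rw [← Real.exp_sub]
      congr 1
      ring

variable [Nonempty I]

theorem softmax_mul_softmax_le_exp (β : ℝ) (y : I → ℝ) (i j l : I) :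
    softmax β y i * softmax β y j ≤ Real.exp (-(β * (y l - min (y i) (y j)))) := by
  rcases min_choice (y i) (y j) with h | h
  · rw [h]
    exact (mul_le_of_le_one_right (softmax_nonneg β y i) (softmax_le_one β y j)).trans
      (softmax_le_exp β y i l)
  · rw [h]
    exact (mul_le_of_le_one_left (softmax_nonneg β y j) (softmax_le_one β y i)).trans
      (softmax_le_exp β y j l)

variable {E : Type*} [NormedAddCommGroup E] [InnerProductSpace ℝ E] {p : I → E} {i j : I}

theorem exists_softmax_mul_softmax_le (h : HasTransversal p i j) :
    ∃ k, k ≠ i ∧ k ≠ j ∧ ∃ r > 0, ∀ β ≥ 0, ∀ x,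
      softmax β (pairing p x) i * softmax β (pairing p x) j ≤
        Real.exp (-(β * (r * |⟪p j - p i, x⟫| + r * |⟪p k - p i, x⟫|))) := by
  obtain ⟨w, hw, hsum, ⟨s, t, hs, ht, hst, hseg⟩, k, hki, hkj, hk⟩ := h
  refine ⟨k, hki, hkj, w k / 2, half_pos hk, fun β hβ x => ?_⟩
  obtain ⟨l, hl⟩ := Finite.exists_max (pairing p x)
  have hmean : s * ⟪p i, x⟫ + t * ⟪p j, x⟫ = ∑ m, w m * ⟪p m, x⟫ := by
    simpa only [inner_add_left, sum_inner, real_inner_smul_left] using congrArg (⟪·, x⟫) hseg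
  have hmin : min ⟪p i, x⟫ ⟪p j, x⟫ ≤ ∑ m, w m * ⟪p m, x⟫ := by
    rw [← hmean]
    exact Convex.min_le_combo _ _ hs ht hst
  have hgap := mul_abs_sub_add_abs_sub_le (k := k) hw hsum hmin hl
  refine (softmax_mul_softmax_le_exp β (pairing p x) i j l).trans (Real.exp_le_exp.2 ?_)
  simp only [inner_sub_left]
  exact neg_le_neg (mul_le_mul_of_nonneg_left hgap hβ)

variable [FiniteDimensional ℝ E] [MeasurableSpace E] [BorelSpace E] {ι : I → I}

theorem tendsto_mul_integral_softmax_mul_softmax (hp : Submodule.span ℝ (range p) = ⊤)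
    (hι : ∀ i, p (ι i) = -p i) (hinj : Function.Injective p)
    (hvert : ∀ i, p i ∈ extremePoints ℝ (convexHull ℝ (range p))) (hij : i ≠ j)
    (h : HasTransversal p i j) :
    Tendsto (fun β => β * ∫ x, softmax β (pairing p x) i * softmax β (pairing p x) j
      ∂gibbsMeasure β p) atTop (𝓝 0) := by
  obtain ⟨k, hki, hkj, r, hr, hle⟩ := exists_softmax_mul_softmax_le h
  obtain ⟨c, hc, hnorm⟩ := exists_mul_norm_le (pairing_injective hp)
  have hb : r • (p k - p i) ≠ 0 := smul_ne_zero hr.ne' (sub_ne_zero.2 (hinj.ne hki))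
  have hab : r • (p j - p i) ∉ ℝ ∙ (r • (p k - p i)) := by
    rw [Submodule.span_singleton_smul_eq (IsUnit.mk0 r hr.ne'),
      Submodule.smul_mem_iff _ hr.ne']
    exact sub_notMem_span_singleton hinj hvert hij hki.symm hkj.symm
  refine tendsto_of_tendsto_of_tendsto_of_le_of_le' tendsto_const_nhds
    (tendsto_mul_integral_exp_neg_abs_add_abs hb hab hc) ?_ ?_
  · filter_upwards [eventually_ge_atTop 0] with β hβ
    exact mul_nonneg hβ (integral_nonneg fun x =>
      mul_nonneg (softmax_nonneg _ _ _) (softmax_nonneg _ _ _))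
  · filter_upwards [eventually_gt_atTop 0] with β hβ
    rw [integral_gibbsMeasure]
    refine mul_le_mul_of_nonneg_left (integral_mono_of_nonneg (.of_forall fun x => ?_) ?_
      (.of_forall fun x => ?_)) hβ.le
    · exact mul_nonneg (expNegLse_pos _ _).le
        (mul_nonneg (softmax_nonneg _ _ _) (softmax_nonneg _ _ _))
    · refine (integrable_exp_neg_mul_norm hc).mono' (by fun_prop) (.of_forall fun x => ?_)
      rw [Real.norm_of_nonneg (by positivity)]
      exact mul_le_of_le_one_right (Real.exp_pos _).le
        (Real.exp_le_one_iff.2 (neg_nonpos.2 (by positivity)))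
    · simp only [real_inner_smul_left, abs_mul, abs_of_pos hr]
      exact mul_le_mul ((expNegLse_pairing_le hβ hι x).trans
        (Real.exp_le_exp.2 (neg_le_neg (hnorm x)))) (hle β hβ.le x)
        (mul_nonneg (softmax_nonneg _ _ _) (softmax_nonneg _ _ _)) (Real.exp_pos _).le

end NonEdge

section Cell

variable {I : Type*} {E : Type*} [NormedAddCommGroup E] [InnerProductSpace ℝ E] {p : I → E} {i : I}
  {x : E}

/-- The open normal cone of the polytope `convexHull ℝ (range p)` at `p i`: the directions in which
`p i` is the strictly farthest of the points `p j`. -/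
def normalCell (p : I → E) (i : I) : Set E := {x | ∀ j ≠ i, ⟪p j, x⟫ < ⟪p i, x⟫}

theorem eq_of_mem_normalCell {j : I} (hi : x ∈ normalCell p i) (hj : x ∈ normalCell p j) :
    i = j := by
  by_contra h
  exact lt_asymm (hi j (Ne.symm h)) (hj i h)

theorem isOpen_normalCell [Finite I] (p : I → E) (i : I) : IsOpen (normalCell p i) := by
  simp only [normalCell, ofPred_forall]
  exact isOpen_iInter_of_finite fun j => isOpen_iInter_of_finite fun _ =>
    isOpen_lt (by fun_prop) (by fun_prop)

variable [Fintype I]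

/-- The function with value `ω i` on the normal cell of `p i`, and `0` off the normal cells. -/
noncomputable def cellFunction (p : I → E) (ω : I → ℝ) (x : E) : ℝ :=
  ∑ i, (normalCell p i).indicator (fun _ => ω i) x

theorem cellFunction_of_mem (ω : I → ℝ) (hx : x ∈ normalCell p i) : cellFunction p ω x = ω i := by
  rw [cellFunction, Finset.sum_eq_single i (fun j _ hj => indicator_of_notMem
    (fun h => hj (eq_of_mem_normalCell h hx)) _) (by simp), indicator_of_mem hx]

theorem abs_cellFunction_le (ω : I → ℝ) (x : E) : |cellFunction p ω x| ≤ ‖ω‖ := by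
  by_cases h : ∃ i, x ∈ normalCell p i
  · obtain ⟨i, hi⟩ := h
    rw [cellFunction_of_mem ω hi]
    exact norm_le_pi_norm ω i
  · push Not at h
    simp [cellFunction, indicator_of_notMem (h _)]

@[fun_prop]
theorem measurable_cellFunction [MeasurableSpace E] [BorelSpace E] (p : I → E) (ω : I → ℝ) :
    Measurable (cellFunction p ω) :=
  Finset.measurable_fun_sum _ fun i _ =>
    measurable_const.indicator (isOpen_normalCell p i).measurableSet

end Cell

section SoftmaxLimit

variable {I : Type*} [Fintype I] {y : I → ℝ} {i : I}

theorem tendsto_softmax_zero {j : I} (h : y j < y i) :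
    Tendsto (fun β => softmax β y j) atTop (𝓝 0) :=
  squeeze_zero (fun β => softmax_nonneg β y j) (fun β => softmax_le_exp β y j i)
    (Real.tendsto_exp_neg_atTop_nhds_zero.comp (tendsto_id.atTop_mul_const (sub_pos.2 h)))

variable [Nonempty I]

theorem tendsto_softmax_one (hy : ∀ j ≠ i, y j < y i) :
    Tendsto (fun β => softmax β y i) atTop (𝓝 1) := by
  classical
  have hsum (β : ℝ) : softmax β y i = 1 - ∑ j ∈ Finset.univ.erase i, softmax β y j := by
    rw [← sum_softmax β y, ← Finset.add_sum_erase _ _ (Finset.mem_univ i), add_sub_cancel_right]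
  have hrest : Tendsto (fun β => ∑ j ∈ Finset.univ.erase i, softmax β y j) atTop (𝓝 0) := by
    rw [← Finset.sum_const_zero (ι := I) (s := Finset.univ.erase i)]
    exact tendsto_finsetSum _ fun j hj =>
      tendsto_softmax_zero (hy j (Finset.ne_of_mem_erase hj))
  simpa only [hsum, sub_zero] using hrest.const_sub 1

theorem tendsto_softmaxMean (hy : ∀ j ≠ i, y j < y i) (ω : I → ℝ) :
    Tendsto (fun β => softmaxMean β y ω) atTop (𝓝 (ω i)) := by
  classical
  have hterm (j : I) : Tendsto (fun β => softmax β y j * ω j) atTop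
      (𝓝 (if j = i then ω i else 0)) := by
    rcases eq_or_ne j i with rfl | hj
    · simpa using (tendsto_softmax_one hy).mul_const (ω j)
    · simpa [hj] using (tendsto_softmax_zero (hy j hj)).mul_const (ω j)
  simpa only [softmaxMean, Finset.sum_ite_eq', Finset.mem_univ, if_true] using
    tendsto_finsetSum Finset.univ fun j _ => hterm j

end SoftmaxLimit

section CellLimit

variable {I : Type*} {E : Type*} [NormedAddCommGroup E] [InnerProductSpace ℝ E] {p : I → E} {i : I}

variable [FiniteDimensional ℝ E]

theorem normalCell_nonempty [Finite I] (hinj : Function.Injective p)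
    (hi : p i ∈ extremePoints ℝ (convexHull ℝ (range p))) : (normalCell p i).Nonempty := by
  obtain ⟨f, hf⟩ := exists_forall_lt_of_mem_extremePoints hinj hi
  refine ⟨(InnerProductSpace.toDual ℝ E).symm f, fun j hj => ?_⟩
  simpa only [real_inner_comm _ (p _), InnerProductSpace.toDual_symm_apply] using hf j hj

theorem ae_exists_mem_normalCell [Finite I] [Nonempty I] [MeasurableSpace E] [BorelSpace E]
    (hinj : Function.Injective p) : ∀ᵐ x, ∃ i, x ∈ normalCell p i := by
  have hne : ∀ᵐ x, ∀ i j, i ≠ j → ⟪p i - p j, x⟫ ≠ 0 := by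
    simp only [eventually_countable_forall]
    exact fun i j hij => ae_inner_ne_zero (sub_ne_zero.2 (hinj.ne hij))
  filter_upwards [hne] with x hx
  obtain ⟨i, hi⟩ := Finite.exists_max fun i => ⟪p i, x⟫
  refine ⟨i, fun j hj => (hi j).lt_of_ne fun h => hx j i hj ?_⟩
  rw [inner_sub_left, h, sub_self]

variable [Fintype I] [MeasurableSpace E] [BorelSpace E] {ι : I → I}

theorem ae_tendsto_softmaxMean [Nonempty I] (hinj : Function.Injective p) (ω : I → ℝ) : ∀ᵐ x,
    Tendsto (fun β => softmaxMean β (pairing p x) ω) atTop (𝓝 (cellFunction p ω x)) := by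
  filter_upwards [ae_exists_mem_normalCell hinj] with x ⟨i, hi⟩
  rw [cellFunction_of_mem ω hi]
  exact tendsto_softmaxMean hi ω

theorem tendsto_integral_softmaxMean [Nonempty I] (hp : Submodule.span ℝ (range p) = ⊤)
    (hι : ∀ i, p (ι i) = -p i) (hinj : Function.Injective p) (ω : I → ℝ) :
    Tendsto (fun β => ∫ x, softmaxMean β (pairing p x) ω ∂gibbsMeasure β p) atTop
      (𝓝 (∫ x, cellFunction p ω x ∂limitMeasure p)) :=
  tendsto_integral_gibbsMeasure hp hι (fun β => by fun_prop)
    (fun β x => abs_softmaxMean_le β (pairing p x) ω) (ae_tendsto_softmaxMean hinj ω)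

theorem isOpenPosMeasure_limitMeasure : (limitMeasure p).IsOpenPosMeasure :=
  (withDensity_absolutelyContinuous' (by fun_prop)
    (.of_forall fun x => by simp [Real.exp_pos])).isOpenPosMeasure

theorem integral_cellFunction (hp : Submodule.span ℝ (range p) = ⊤) (ω : I → ℝ) :
    ∫ x, cellFunction p ω x ∂limitMeasure p =
      ∑ i, (limitMeasure p).real (normalCell p i) * ω i := by
  have := isFiniteMeasure_limitMeasure hp
  have hmeas (i : I) := (isOpen_normalCell p i).measurableSet
  simp only [cellFunction]
  rw [integral_finsetSum _ fun i _ => (integrable_const (ω i)).indicator (hmeas i)]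
  simp [integral_indicator_const _ (hmeas _)]

theorem limitMeasure_normalCell_pos (hp : Submodule.span ℝ (range p) = ⊤)
    (hinj : Function.Injective p) (hi : p i ∈ extremePoints ℝ (convexHull ℝ (range p))) :
    0 < (limitMeasure p).real (normalCell p i) := by
  have := isFiniteMeasure_limitMeasure hp
  have := isOpenPosMeasure_limitMeasure (p := p)
  exact ENNReal.toReal_pos ((isOpen_normalCell p i).measure_pos _ (normalCell_nonempty hinj hi)).ne'
    (measure_ne_top _ _)

end CellLimit

section Energy

variable {I κ : Type*} [Fintype I] [Fintype κ] {F : Type*} [NormedAddCommGroup F]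
  [InnerProductSpace ℝ F]

theorem sum_lseCurvature_inner [Nonempty I] (b : OrthonormalBasis κ ℝ F) (q : I → F) (β : ℝ)
    (y : I → ℝ) :
    ∑ k, lseCurvature β y (fun i => ⟪b k, q i⟫) = softmaxMean β y (fun i => ‖q i‖ ^ 2) -
      (1 + β) / 2 * ∑ i, ∑ j, softmax β y i * softmax β y j * ‖q i - q j‖ ^ 2 := by
  have hnorm (v : F) : ‖v‖ ^ 2 = ∑ k, ⟪b k, v⟫ ^ 2 := by
    simp only [← b.sum_sq_norm_inner_right v, Real.norm_eq_abs, sq_abs]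
  simp only [lseCurvature_eq, Finset.sum_sub_distrib, ← Finset.mul_sum, softmaxMean, hnorm,
    inner_sub_right]
  congr 2
  · rw [Finset.sum_comm]
    simp only [Finset.mul_sum]
  · rw [Finset.sum_comm]
    refine Finset.sum_congr rfl fun i _ => ?_
    rw [Finset.sum_comm]
    simp only [Finset.mul_sum]

variable {E : Type*} [NormedAddCommGroup E] [InnerProductSpace ℝ E] [FiniteDimensional ℝ E]
  {p : I → E} {q : I → F} {β : ℝ}

theorem le_sum_lseCurvature_inner [Nonempty I] (b : OrthonormalBasis κ ℝ F) {D : I → I → ℝ}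
    (hD : ∀ i j, ‖q i - q j‖ ^ 2 ≤ ‖p i - p j‖ ^ 2 + D i j) (hβ : 0 ≤ β) (y : I → ℝ) :
    ∑ k, lseCurvature β y (pairing p (stdOrthonormalBasis ℝ E k)) +
        softmaxMean β y (fun i => ‖q i‖ ^ 2 - ‖p i‖ ^ 2) -
        ∑ i, ∑ j, (1 + β) / 2 * D i j * (softmax β y i * softmax β y j) ≤
      ∑ k, lseCurvature β y (fun i => ⟪b k, q i⟫) := by
  have hpairing (k) : pairing p (stdOrthonormalBasis ℝ E k) =
      fun i => ⟪stdOrthonormalBasis ℝ E k, p i⟫ := funext fun i => real_inner_comm _ _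
  have hsum : ∑ i, ∑ j, softmax β y i * softmax β y j * ‖q i - q j‖ ^ 2 ≤
      ∑ i, ∑ j, softmax β y i * softmax β y j * ‖p i - p j‖ ^ 2 +
        ∑ i, ∑ j, D i j * (softmax β y i * softmax β y j) := by
    simp only [← Finset.sum_add_distrib, mul_comm (D _ _), ← mul_add]
    gcongr with i _ j _
    · exact mul_nonneg (softmax_nonneg _ _ _) (softmax_nonneg _ _ _)
    · exact hD i j
  have hmean : softmaxMean β y (fun i => ‖q i‖ ^ 2 - ‖p i‖ ^ 2) =
      softmaxMean β y (fun i => ‖q i‖ ^ 2) - softmaxMean β y (fun i => ‖p i‖ ^ 2) := by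
    simp only [softmaxMean, mul_sub, Finset.sum_sub_distrib]
  simp only [hpairing, sum_lseCurvature_inner, hmean, mul_assoc, ← Finset.mul_sum] at hsum ⊢
  have := mul_le_mul_of_nonneg_left hsum (show 0 ≤ (1 + β) / 2 by positivity)
  linarith

variable [Nonempty I] [MeasurableSpace E] [BorelSpace E] {ι : I → I}

theorem integrable_gibbsMeasure_of_bound (hβ : 0 < β) (hp : Submodule.span ℝ (range p) = ⊤)
    (hι : ∀ i, p (ι i) = -p i) {f : E → ℝ} (hf : Continuous f) {C : ℝ} (hC : ∀ x, |f x| ≤ C) :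
    Integrable f (gibbsMeasure β p) :=
  have := isFiniteMeasure_gibbsMeasure hβ hp hι
  .of_bound hf.aestronglyMeasurable C (.of_forall hC)

theorem integral_softmaxMean_sub_le (hp : Submodule.span ℝ (range p) = ⊤)
    (hι : ∀ i, p (ι i) = -p i) (b : OrthonormalBasis κ ℝ F) {D : I → I → ℝ}
    (hD : ∀ i j, ‖q i - q j‖ ^ 2 ≤ ‖p i - p j‖ ^ 2 + D i j) (hβ : 0 < β) :
    ∫ x, softmaxMean β (pairing p x) (fun i => ‖q i‖ ^ 2 - ‖p i‖ ^ 2) ∂gibbsMeasure β p -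
        ∑ i, ∑ j, (1 + β) / 2 * D i j *
          ∫ x, softmax β (pairing p x) i * softmax β (pairing p x) j ∂gibbsMeasure β p ≤
      ∑ k, ∫ x, lseCurvature β (pairing p x) (fun i => ⟪b k, q i⟫) ∂gibbsMeasure β p := by
  have hcurv (ω : I → ℝ) : Integrable (fun x => lseCurvature β (pairing p x) ω)
      (gibbsMeasure β p) :=
    integrable_gibbsMeasure_of_bound hβ hp hι (by fun_prop)
      fun x => abs_lseCurvature_le hβ.le (pairing p x) ω
  have hmean (ω : I → ℝ) : Integrable (fun x => softmaxMean β (pairing p x) ω)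
      (gibbsMeasure β p) :=
    integrable_gibbsMeasure_of_bound hβ hp hι (by fun_prop)
      fun x => abs_softmaxMean_le β (pairing p x) ω
  have hpair (i j : I) : Integrable (fun x => softmax β (pairing p x) i *
      softmax β (pairing p x) j) (gibbsMeasure β p) :=
    integrable_gibbsMeasure_of_bound hβ hp hι (by fun_prop) (C := 1) fun x => by
      rw [abs_of_nonneg (mul_nonneg (softmax_nonneg _ _ _) (softmax_nonneg _ _ _))]
      exact mul_le_one₀ (softmax_le_one _ _ _) (softmax_nonneg _ _ _) (softmax_le_one _ _ _)
  have hbasis := integrable_finsetSum Finset.univ fun k _ =>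
    hcurv (pairing p (stdOrthonormalBasis ℝ E k))
  have hpairs := integrable_finsetSum Finset.univ fun i _ =>
    integrable_finsetSum Finset.univ fun j _ => (hpair i j).const_mul ((1 + β) / 2 * D i j)
  have hle := integral_mono ((hbasis.add (hmean _)).sub hpairs)
    (integrable_finsetSum Finset.univ fun k _ => hcurv _) fun x =>
      le_sum_lseCurvature_inner b hD hβ.le (pairing p x)
  rw [integral_sub' (hbasis.add (hmean _)) hpairs, integral_add' hbasis (hmean _),
    integral_finsetSum _ fun k _ => hcurv _, integral_finsetSum _ fun k _ => hcurv _,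
    integral_finsetSum _ fun i _ => integrable_finsetSum Finset.univ fun j _ =>
      (hpair i j).const_mul _] at hle
  simpa only [integral_lseCurvature_pairing hβ hp hι, Finset.sum_const_zero, zero_add,
    integral_finsetSum Finset.univ fun j _ => (hpair _ j).const_mul _, integral_const_mul]
    using hle

/-- The gap in `integral_softmaxMean_sub_le` vanishes in the limit, because the pairs with
`D i j ≠ 0` are not edges. -/
theorem tendsto_integral_softmaxMean_sub (hp : Submodule.span ℝ (range p) = ⊤)
    (hι : ∀ i, p (ι i) = -p i) (hinj : Function.Injective p)
    (hvert : ∀ i, p i ∈ extremePoints ℝ (convexHull ℝ (range p))) (ω : I → ℝ) {D : I → I → ℝ}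
    (hdiag : ∀ i, D i i = 0) (hedge : ∀ i j, ¬HasTransversal p i j → D i j = 0) :
    Tendsto (fun β => ∫ x, softmaxMean β (pairing p x) ω ∂gibbsMeasure β p -
        ∑ i, ∑ j, (1 + β) / 2 * D i j *
          ∫ x, softmax β (pairing p x) i * softmax β (pairing p x) j ∂gibbsMeasure β p) atTop
      (𝓝 (∫ x, cellFunction p ω x ∂limitMeasure p)) := by
  have hterm (i j : I) : Tendsto (fun β => (1 + β) / 2 * D i j *
      ∫ x, softmax β (pairing p x) i * softmax β (pairing p x) j ∂gibbsMeasure β p)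
      atTop (𝓝 0) := by
    by_cases h : i ≠ j ∧ HasTransversal p i j
    · have hcoeff : Tendsto (fun β : ℝ => (β⁻¹ + 1) / 2 * D i j) atTop
          (𝓝 ((0 + 1) / 2 * D i j)) :=
        ((tendsto_inv_atTop_zero.add_const 1).div_const 2).mul_const _
      rw [← mul_zero ((0 + 1) / 2 * D i j)]
      refine (hcoeff.mul (tendsto_mul_integral_softmax_mul_softmax hp hι hinj hvert h.1
        h.2)).congr' ((eventually_ne_atTop 0).mono fun β hβ => ?_)
      field_simp
    · have hD : D i j = 0 := by
        rcases not_and_or.1 h with h | h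
        · rw [not_not.1 h, hdiag]
        · exact hedge i j h
      simp [hD]
  simpa using (tendsto_integral_softmaxMean hp hι hinj ω).sub
    (tendsto_finsetSum Finset.univ fun i _ => tendsto_finsetSum Finset.univ fun j _ => hterm i j)

theorem exists_tendsto_le_sum_integral_lseCurvature (hp : Submodule.span ℝ (range p) = ⊤)
    (hι : ∀ i, p (ι i) = -p i) (hinj : Function.Injective p)
    (hvert : ∀ i, p i ∈ extremePoints ℝ (convexHull ℝ (range p)))
    (hedge : ∀ i j, ¬HasTransversal p i j → ‖q i - q j‖ ≤ ‖p i - p j‖)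
    (b : OrthonormalBasis κ ℝ F) :
    ∃ L : ℝ → ℝ, Tendsto L atTop
        (𝓝 (∑ i, (limitMeasure p).real (normalCell p i) * (‖q i‖ ^ 2 - ‖p i‖ ^ 2))) ∧
      ∀ β > 0, L β ≤
        ∑ k, ∫ x, lseCurvature β (pairing p x) (fun i => ⟪b k, q i⟫) ∂gibbsMeasure β p := by
  set D : I → I → ℝ := fun i j => max (‖q i - q j‖ ^ 2 - ‖p i - p j‖ ^ 2) 0 with hDdef
  have hD (i j : I) : ‖q i - q j‖ ^ 2 ≤ ‖p i - p j‖ ^ 2 + D i j :=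
    sub_le_iff_le_add'.1 (le_max_left _ _)
  have hDedge (i j : I) (h : ¬HasTransversal p i j) : D i j = 0 :=
    max_eq_right (sub_nonpos.2 (pow_le_pow_left₀ (norm_nonneg _) (hedge i j h) 2))
  rw [← integral_cellFunction hp]
  exact ⟨_, tendsto_integral_softmaxMean_sub hp hι hinj hvert _ (by simp [hDdef]) hDedge,
    fun β hβ => integral_softmaxMean_sub_le hp hι b hD hβ⟩

theorem integral_lseCurvature_inner_nonpos (hp : Submodule.span ℝ (range p) = ⊤)
    (hinv : Function.Involutive ι) (hι : ∀ i, p (ι i) = -p i) (hqι : ∀ i, q (ι i) = -q i)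
    (v : F) (hβ : 0 < β) :
    ∫ x, lseCurvature β (pairing p x) (fun i => ⟪v, q i⟫) ∂gibbsMeasure β p ≤ 0 :=
  integral_lseCurvature_nonpos hβ hp hinv hι fun i => by simp [hqι]

theorem norm_eq_of_norm_le [FiniteDimensional ℝ F] (hp : Submodule.span ℝ (range p) = ⊤)
    (hinv : Function.Involutive ι) (hι : ∀ i, p (ι i) = -p i) (hinj : Function.Injective p)
    (hvert : ∀ i, p i ∈ extremePoints ℝ (convexHull ℝ (range p))) (hqι : ∀ i, q (ι i) = -q i)
    (hedge : ∀ i j, ¬HasTransversal p i j → ‖q i - q j‖ ≤ ‖p i - p j‖)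
    (hnorm : ∀ i, ‖p i‖ ≤ ‖q i‖) (i : I) : ‖q i‖ = ‖p i‖ := by
  obtain ⟨L, hL, hLle⟩ := exists_tendsto_le_sum_integral_lseCurvature hp hι hinj hvert hedge
    (stdOrthonormalBasis ℝ F)
  have hterm (i : I) : 0 ≤ (limitMeasure p).real (normalCell p i) * (‖q i‖ ^ 2 - ‖p i‖ ^ 2) :=
    mul_nonneg measureReal_nonneg
      (sub_nonneg.2 (pow_le_pow_left₀ (norm_nonneg _) (hnorm i) 2))
  have hsum : ∑ i, (limitMeasure p).real (normalCell p i) * (‖q i‖ ^ 2 - ‖p i‖ ^ 2) ≤ 0 :=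
    le_of_tendsto hL ((eventually_gt_atTop 0).mono fun β hβ => (hLle β hβ).trans
      (Finset.sum_nonpos fun k _ => integral_lseCurvature_inner_nonpos hp hinv hι hqι _ hβ))
  have hi := (Finset.sum_eq_zero_iff_of_nonneg fun i _ => hterm i).1
    (hsum.antisymm (Finset.sum_nonneg fun i _ => hterm i)) i (Finset.mem_univ i)
  have hsq := (mul_eq_zero_iff_left (limitMeasure_normalCell_pos hp hinj (hvert i)).ne').1 hi
  exact (sq_eq_sq₀ (norm_nonneg _) (norm_nonneg _)).1 (sub_eq_zero.1 hsq)

theorem tendsto_integral_lseCurvature_inner (hp : Submodule.span ℝ (range p) = ⊤)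
    (hinv : Function.Involutive ι) (hι : ∀ i, p (ι i) = -p i) (hinj : Function.Injective p)
    (hvert : ∀ i, p i ∈ extremePoints ℝ (convexHull ℝ (range p))) (hqι : ∀ i, q (ι i) = -q i)
    (hedge : ∀ i j, ¬HasTransversal p i j → ‖q i - q j‖ ≤ ‖p i - p j‖)
    (hnorm : ∀ i, ‖q i‖ = ‖p i‖) (b : OrthonormalBasis κ ℝ F) (k : κ) :
    Tendsto (fun β => ∫ x, lseCurvature β (pairing p x) (fun i => ⟪b k, q i⟫) ∂gibbsMeasure β p)
      atTop (𝓝 0) := by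
  classical
  obtain ⟨L, hL, hLle⟩ := exists_tendsto_le_sum_integral_lseCurvature hp hι hinj hvert hedge b
  simp only [hnorm, sub_self, mul_zero, Finset.sum_const_zero] at hL
  refine tendsto_of_tendsto_of_tendsto_of_le_of_le' hL tendsto_const_nhds ?_ ?_
  · filter_upwards [eventually_gt_atTop 0] with β hβ
    refine (hLle β hβ).trans ?_
    rw [← Finset.add_sum_erase _ _ (Finset.mem_univ k)]
    exact add_le_of_nonpos_right (Finset.sum_nonpos fun l _ =>
      integral_lseCurvature_inner_nonpos hp hinv hι hqι _ hβ)
  · exact (eventually_gt_atTop 0).mono fun β hβ =>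
      integral_lseCurvature_inner_nonpos hp hinv hι hqι _ hβ

end Energy

section RidgeLimit

variable {I : Type*} [Fintype I] [Nonempty I] {ι : I → I} {E : Type*} [NormedAddCommGroup E]
  [InnerProductSpace ℝ E] [FiniteDimensional ℝ E] [MeasurableSpace E] [BorelSpace E] {p : I → E}
  {ω : I → ℝ}

theorem tendsto_ridgeIntegral_gibbsMeasure (hp : Submodule.span ℝ (range p) = ⊤)
    (hι : ∀ i, p (ι i) = -p i) {f : ℝ → ℝ} (hf : Continuous f) {A C : ℝ} (hfA : ∀ t, |f t| ≤ A)
    {g : ℝ → E → ℝ} {g₀ : E → ℝ} (hg : ∀ β, Measurable (g β)) (hgC : ∀ β x, |g β x| ≤ C)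
    (hlim : ∀ᵐ x, Tendsto (fun β => g β x) atTop (𝓝 (g₀ x))) (θ : E) (s : ℝ) :
    Tendsto (fun β => ridgeIntegral (gibbsMeasure β p) θ f (g β) s) atTop
      (𝓝 (ridgeIntegral (limitMeasure p) θ f g₀ s)) := by
  refine tendsto_integral_gibbsMeasure hp hι (C := C * A)
    (fun β => (hg β).mul (by fun_prop)) (fun β x => ?_) (hlim.mono fun x hx => hx.mul_const _)
  rw [abs_mul]
  exact mul_le_mul (hgC β x) (hfA _) (abs_nonneg _) ((abs_nonneg _).trans (hgC β x))

theorem eq_zero_of_forall_mul_le_sq_mul {a b : ℝ} (h : ∀ δ, δ * a ≤ δ ^ 2 * b) : a = 0 := by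
  have hb : 0 < |b| + 1 := by positivity
  have hδ := h (a / (|b| + 1))
  rw [div_pow, div_mul_eq_mul_div, div_mul_eq_mul_div, div_le_div_iff₀ hb (by positivity)] at hδ
  have hle : a ^ 2 * (|b| + 1) ≤ a ^ 2 * b := le_of_mul_le_mul_right (by linarith) hb
  nlinarith [mul_nonneg (sq_nonneg a) (sub_nonneg.2 (le_abs_self b))]

/-- The quadratic inequality `gibbs_quadratic_le` loses its constant term in the limit, so its
linear term vanishes as well. -/
theorem ridgeIntegral_cellFunction_mul_eq (hp : Submodule.span ℝ (range p) = ⊤)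
    (hinv : Function.Involutive ι) (hι : ∀ i, p (ι i) = -p i) (hinj : Function.Injective p)
    (hω : ∀ i, ω (ι i) = -ω i)
    (hcurv : Tendsto (fun β => ∫ x, lseCurvature β (pairing p x) ω ∂gibbsMeasure β p) atTop (𝓝 0))
    (θ : E) (s : ℝ) :
    ridgeIntegral (limitMeasure p) θ Real.sigmoid (cellFunction p ω) s *
        ridgeIntegral (limitMeasure p) θ logisticDensityDeriv 1 s =
      ridgeIntegral (limitMeasure p) θ logisticDensity (cellFunction p ω) s *
        ridgeIntegral (limitMeasure p) θ logisticDensity 1 s := by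
  have := isFiniteMeasure_limitMeasure hp
  have := isOpenPosMeasure_limitMeasure (p := p)
  have hmean {f : ℝ → ℝ} (hf : Continuous f) (hfA : ∀ t, |f t| ≤ 1) :=
    tendsto_ridgeIntegral_gibbsMeasure hp hι hf hfA (fun β => by fun_prop)
      (fun β x => abs_softmaxMean_le β (pairing p x) ω) (ae_tendsto_softmaxMean hinj ω) θ s
  have hone {f : ℝ → ℝ} (hf : Continuous f) (hfA : ∀ t, |f t| ≤ 1) :=
    tendsto_ridgeIntegral_gibbsMeasure hp hι hf hfA (fun _ => measurable_one) (C := 1) (by simp)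
      (.of_forall fun _ => tendsto_const_nhds) θ s
  have hM := hone (by fun_prop) abs_sigmoid_le_one
  have hR := hone (by fun_prop) abs_logisticDensity_le_one
  have hκ := hone (by fun_prop) abs_logisticDensityDeriv_le_one
  have hN := hmean (by fun_prop) abs_sigmoid_le_one
  have hG := hmean (by fun_prop) abs_logisticDensity_le_one
  have hle (δ : ℝ) := le_of_tendsto_of_tendsto
    (hM.mul (((hcurv.mul hR).add (((hN.mul hκ).sub (hG.mul hR)).const_mul (2 * δ))).add
      ((hκ.const_mul (δ ^ 2)).mul hR)))
    ((hR.pow 3).const_mul (δ ^ 2))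
    ((eventually_gt_atTop 0).mono fun β hβ => gibbs_quadratic_le hβ hp hinv hι hω θ s δ)
  set M := ridgeIntegral (limitMeasure p) θ Real.sigmoid 1 s
  have hMpos : 0 < M := ridgeIntegral_one_pos (by fun_prop) Real.sigmoid_pos abs_sigmoid_le_one
  set R := ridgeIntegral (limitMeasure p) θ logisticDensity 1 s
  set κ := ridgeIntegral (limitMeasure p) θ logisticDensityDeriv 1 s
  refine sub_eq_zero.1 ((mul_eq_zero_iff_left (mul_pos two_pos hMpos).ne').1
    (eq_zero_of_forall_mul_le_sq_mul (b := R ^ 3 - M * κ * R) fun δ => ?_))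
  linarith [hle δ]

end RidgeLimit

section RidgeDerivative

variable {E : Type*} [NormedAddCommGroup E] [InnerProductSpace ℝ E] [FiniteDimensional ℝ E]
  [MeasurableSpace E] [BorelSpace E] {μ : Measure E} {θ : E} {f f' φ : ℝ → ℝ} {g : E → ℝ} {A C : ℝ}

theorem hasDerivAt_ridgeIntegral [IsFiniteMeasure μ] (hf : ∀ t, HasDerivAt f (f' t) t)
    (hf' : Continuous f') (hf'A : ∀ t, |f' t| ≤ A) (hg : Measurable g) (hgC : ∀ x, |g x| ≤ C)
    {s : ℝ} (hint : Integrable (fun x => g x * f (⟪θ, x⟫ - s)) μ) :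
    HasDerivAt (ridgeIntegral μ θ f g) (-ridgeIntegral μ θ f' g s) s := by
  have hfc : Continuous f := continuous_iff_continuousAt.2 fun t => (hf t).continuousAt
  have hderiv (x : E) (t : ℝ) :
      HasDerivAt (fun t => g x * f (⟪θ, x⟫ - t)) (-(g x * f' (⟪θ, x⟫ - t))) t :=
    (((hf _).comp t ((hasDerivAt_id t).const_sub _)).const_mul (g x)).congr_deriv (by simp)
  refine (hasDerivAt_integral_of_dominated_loc_of_deriv_le univ_mem
    (.of_forall fun t => by fun_prop) hint (by fun_prop) (bound := fun _ => C * A)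
    (.of_forall fun x t _ => ?_) (integrable_const _)
    (.of_forall fun x t _ => hderiv x t)).2.congr_deriv (integral_neg _)
  rw [norm_neg, norm_mul]
  exact mul_le_mul (hgC x) (hf'A _) (norm_nonneg _) ((abs_nonneg _).trans (hgC x))

theorem tendsto_ridgeIntegral_atTop (hf : Continuous f) (hmono : Monotone f) (hf0 : ∀ t, 0 ≤ f t)
    (hlim : Tendsto f atBot (𝓝 0)) (hg : Measurable g)
    (hint : Integrable (fun x => g x * f ⟪θ, x⟫) μ) :
    Tendsto (ridgeIntegral μ θ f g) atTop (𝓝 0) := by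
  rw [← integral_zero E ℝ (μ := μ)]
  refine tendsto_integral_filter_of_dominated_convergence _ (.of_forall fun s => by fun_prop)
    ?_ hint.norm (.of_forall fun x => ?_)
  · filter_upwards [eventually_ge_atTop 0] with s hs
    refine .of_forall fun x => ?_
    simp only [norm_mul, Real.norm_of_nonneg (hf0 _)]
    gcongr
    exact hmono (sub_le_self _ hs)
  · simpa [sub_eq_add_neg] using
      (hlim.comp (tendsto_atBot_add_const_left _ ⟪θ, x⟫ tendsto_neg_atTop_atBot)).const_mul (g x)

theorem tendsto_exp_mul_ridgeIntegral_atTop (hφ : Continuous φ) (hφ1 : ∀ t, |φ t| ≤ 1)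
    (hlim : Tendsto φ atBot (𝓝 1)) (hg : Measurable g)
    (hint : Integrable (fun x => g x * Real.exp ⟪θ, x⟫) μ) :
    Tendsto (fun s => Real.exp s * ridgeIntegral μ θ (fun t => Real.exp t * φ t) g s) atTop
      (𝓝 (∫ x, g x * Real.exp ⟪θ, x⟫ ∂μ)) := by
  have hscale (s : ℝ) : Real.exp s * ridgeIntegral μ θ (fun t => Real.exp t * φ t) g s =
      ∫ x, g x * Real.exp ⟪θ, x⟫ * φ (⟪θ, x⟫ - s) ∂μ := by
    rw [ridgeIntegral, ← integral_const_mul]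
    congr with x
    rw [Real.exp_sub]
    field_simp
  simp only [hscale]
  refine tendsto_integral_filter_of_dominated_convergence _ (.of_forall fun s => by fun_prop)
    (.of_forall fun s => .of_forall fun x => ?_) hint.norm (.of_forall fun x => ?_)
  · rw [norm_mul _ (φ _)]
    exact mul_le_of_le_one_right (norm_nonneg _) (hφ1 _)
  · simpa [sub_eq_add_neg] using (hlim.comp
      (tendsto_atBot_add_const_left _ ⟪θ, x⟫ tendsto_neg_atTop_atBot)).const_mul
        (g x * Real.exp ⟪θ, x⟫)

end RidgeDerivative

section Softplus

/-- The smooth approximation `log (1 + exp t)` of `max t 0`, a primitive of `Real.sigmoid`. -/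
noncomputable def softplus (t : ℝ) : ℝ := Real.log (1 + Real.exp t)

theorem sigmoid_eq_exp_mul (t : ℝ) : t.sigmoid = Real.exp t * (-t).sigmoid := by
  simpa [mul_comm] using (Real.sigmoid_mul_rexp_neg (-t)).symm

theorem logisticDensity_eq_exp_mul (t : ℝ) :
    logisticDensity t = Real.exp t * (-t).sigmoid ^ 2 := by
  rw [logisticDensity, ← Real.sigmoid_neg, sigmoid_eq_exp_mul]
  ring

theorem hasDerivAt_softplus (t : ℝ) : HasDerivAt softplus t.sigmoid t := by
  refine (((Real.hasDerivAt_exp t).const_add 1).log (by positivity)).congr_deriv ?_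
  rw [Real.sigmoid, Real.exp_neg]
  field_simp
  ring

@[fun_prop]
theorem continuous_softplus : Continuous softplus :=
  continuous_iff_continuousAt.2 fun t => (hasDerivAt_softplus t).continuousAt

theorem softplus_nonneg (t : ℝ) : 0 ≤ softplus t :=
  Real.log_nonneg (by linarith [Real.exp_pos t])

theorem monotone_softplus : Monotone softplus := fun a b h => by
  unfold softplus
  gcongr

theorem softplus_eq_add_neg (t : ℝ) : softplus t = t + softplus (-t) := by
  have hfactor : 1 + Real.exp t = Real.exp t * (1 + Real.exp (-t)) := by
    rw [mul_add, ← Real.exp_add]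
    simp [add_comm]
  rw [softplus, hfactor, Real.log_mul (by positivity) (by positivity), Real.log_exp, softplus]

theorem softplus_le_exp (t : ℝ) : softplus t ≤ Real.exp t := by
  simpa [softplus] using Real.log_le_sub_one_of_pos (show 0 < 1 + Real.exp t by positivity)

theorem tendsto_softplus_atBot : Tendsto softplus atBot (𝓝 0) :=
  squeeze_zero softplus_nonneg softplus_le_exp Real.tendsto_exp_atBot

end Softplus

section ProportionalRidges

theorem exists_forall_eq_mul_of_deriv_mul_eq {u v u' v' : ℝ → ℝ}
    (hu : ∀ s, HasDerivAt u (u' s) s) (hv : ∀ s, HasDerivAt v (v' s) s) (hv0 : ∀ s, v s ≠ 0)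
    (h : ∀ s, u s * v' s = u' s * v s) : ∃ b, ∀ s, u s = b * v s := by
  have hquot (s : ℝ) : HasDerivAt (fun s => u s / v s) 0 s :=
    ((hu s).fun_div (hv s) (hv0 s)).congr_deriv (by simp [h])
  refine ⟨u 0 / v 0, fun s => (div_eq_iff (hv0 s)).1 ?_⟩
  exact is_const_of_deriv_eq_zero (fun s => (hquot s).differentiableAt) (fun s => (hquot s).deriv)
    s 0

variable {E : Type*} [NormedAddCommGroup E] [InnerProductSpace ℝ E] [FiniteDimensional ℝ E]
  [MeasurableSpace E] [BorelSpace E] {μ : Measure E} {θ : E} {g : E → ℝ} {b C : ℝ}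

theorem integrable_mul_inner_of_abs_le_exp (hint : Integrable (fun x => Real.exp |⟪θ, x⟫|) μ)
    {f : ℝ → ℝ} (hf : Continuous f) {B : ℝ} (hfB : ∀ t, |f t| ≤ B * Real.exp |t|)
    (hg : Measurable g) (hgC : ∀ x, |g x| ≤ C) : Integrable (fun x => g x * f ⟪θ, x⟫) μ := by
  refine (hint.const_mul (C * B)).mono' (by fun_prop) (.of_forall fun x => ?_)
  rw [norm_mul, mul_assoc]
  exact mul_le_mul (hgC x) (hfB _) (norm_nonneg _) ((abs_nonneg _).trans (hgC x))

theorem integrable_mul_exp_inner (hint : Integrable (fun x => Real.exp |⟪θ, x⟫|) μ)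
    (hg : Measurable g) (hgC : ∀ x, |g x| ≤ C) :
    Integrable (fun x => g x * Real.exp ⟪θ, x⟫) μ :=
  integrable_mul_inner_of_abs_le_exp hint Real.continuous_exp (B := 1)
    (fun t => by simpa using le_abs_self t) hg hgC

theorem integrable_mul_softplus (hint : Integrable (fun x => Real.exp |⟪θ, x⟫|) μ)
    (hg : Measurable g) (hgC : ∀ x, |g x| ≤ C) (s : ℝ) :
    Integrable (fun x => g x * softplus (⟪θ, x⟫ - s)) μ := by
  refine integrable_mul_inner_of_abs_le_exp hint (f := fun t => softplus (t - s)) (by fun_prop)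
    (B := Real.exp (-s)) (fun t => ?_) hg hgC
  rw [abs_of_nonneg (softplus_nonneg _), ← Real.exp_add]
  exact (softplus_le_exp _).trans (Real.exp_le_exp.2 (by linarith [le_abs_self t]))

theorem integrable_mul_inner_sub (hint : Integrable (fun x => Real.exp |⟪θ, x⟫|) μ)
    (hg : Measurable g) (hgC : ∀ x, |g x| ≤ C) (s : ℝ) :
    Integrable (fun x => g x * (⟪θ, x⟫ - s)) μ := by
  refine integrable_mul_inner_of_abs_le_exp hint (f := fun t => t - s) (by fun_prop)
    (B := 1 + |s|) (fun t => ?_) hg hgC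
  nlinarith [Real.add_one_le_exp |t|, Real.one_le_exp (abs_nonneg t), abs_sub t s, abs_nonneg s]

theorem integral_mul_exp_inner_eq (hint : Integrable (fun x => Real.exp |⟪θ, x⟫|) μ)
    (hg : Measurable g) (hgC : ∀ x, |g x| ≤ C)
    (h : ∀ s, ridgeIntegral μ θ Real.sigmoid g s = b * ridgeIntegral μ θ logisticDensity 1 s) :
    ∫ x, g x * Real.exp ⟪θ, x⟫ ∂μ = b * ∫ x, Real.exp ⟪θ, x⟫ ∂μ := by
  have hlim : Tendsto (fun t : ℝ => (-t).sigmoid) atBot (𝓝 1) :=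
    Real.tendsto_sigmoid_atTop.comp tendsto_neg_atBot_atTop
  have hN := tendsto_exp_mul_ridgeIntegral_atTop (μ := μ) (by fun_prop)
    (fun t => abs_sigmoid_le_one (-t)) hlim hg (integrable_mul_exp_inner hint hg hgC)
  have hR := tendsto_exp_mul_ridgeIntegral_atTop (μ := μ) (by fun_prop)
    (fun t => (abs_pow _ 2).trans_le (pow_le_one₀ (abs_nonneg _) (abs_sigmoid_le_one (-t))))
    (by simpa using hlim.pow 2) measurable_one
    (integrable_mul_exp_inner hint measurable_one (C := 1) (by simp))
  simp only [← sigmoid_eq_exp_mul, ← logisticDensity_eq_exp_mul, Pi.one_apply, one_mul] at hN hR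
  refine tendsto_nhds_unique hN ((hR.const_mul b).congr fun s => ?_)
  rw [h, mul_left_comm]

theorem ridgeIntegral_softplus_neg (hint : Integrable (fun x => Real.exp |⟪θ, x⟫|) μ)
    (hg : Measurable g) (hgC : ∀ x, |g x| ≤ C) (s : ℝ) :
    ridgeIntegral μ (-θ) softplus g (-s) =
      ridgeIntegral μ θ softplus g s - ∫ x, g x * (⟪θ, x⟫ - s) ∂μ := by
  rw [ridgeIntegral, ridgeIntegral, ← integral_sub (integrable_mul_softplus hint hg hgC s)
    (integrable_mul_inner_sub hint hg hgC s)]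
  congr with x
  rw [softplus_eq_add_neg (⟪θ, x⟫ - s), inner_neg_left]
  ring_nf

variable [IsFiniteMeasure μ]

theorem ridgeIntegral_softplus_eq (hint : Integrable (fun x => Real.exp |⟪θ, x⟫|) μ)
    (hg : Measurable g) (hgC : ∀ x, |g x| ≤ C)
    (h : ∀ s, ridgeIntegral μ θ Real.sigmoid g s = b * ridgeIntegral μ θ logisticDensity 1 s)
    (s : ℝ) : ridgeIntegral μ θ softplus g s = b * ridgeIntegral μ θ Real.sigmoid 1 s := by
  have hone (x : E) : |(1 : E → ℝ) x| ≤ 1 := by simp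
  have hS (s : ℝ) : Integrable (fun x => (1 : E → ℝ) x * (⟪θ, x⟫ - s).sigmoid) μ :=
    integrable_mul_ridge (by fun_prop) abs_sigmoid_le_one measurable_one hone θ s
  have hderiv (s : ℝ) : HasDerivAt
      (fun s => ridgeIntegral μ θ softplus g s - b * ridgeIntegral μ θ Real.sigmoid 1 s) 0 s := by
    refine ((hasDerivAt_ridgeIntegral hasDerivAt_softplus (by fun_prop) abs_sigmoid_le_one hg hgC
      (integrable_mul_softplus hint hg hgC s)).sub ((hasDerivAt_ridgeIntegral
        Real.hasDerivAt_sigmoid continuous_logisticDensity abs_logisticDensity_le_one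
          measurable_one hone (hS s)).const_mul b)).congr_deriv ?_
    rw [h, mul_neg]
    exact sub_self _
  have hlim := (tendsto_ridgeIntegral_atTop (μ := μ) (θ := θ) continuous_softplus
    monotone_softplus softplus_nonneg tendsto_softplus_atBot hg
    (by simpa using integrable_mul_softplus hint hg hgC 0)).sub
    ((tendsto_ridgeIntegral_atTop (μ := μ) (θ := θ) (by fun_prop) Real.sigmoid_monotone
      Real.sigmoid_nonneg Real.tendsto_sigmoid_atBot measurable_one
      (by simpa using hS 0)).const_mul b)
  have hconst (t : ℝ) := is_const_of_deriv_eq_zero (fun s => (hderiv s).differentiableAt)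
    (fun s => (hderiv s).deriv) t s
  have hzero := tendsto_nhds_unique (tendsto_const_nhds.congr fun t => (hconst t).symm) hlim
  rwa [mul_zero, sub_zero, sub_eq_zero] at hzero

theorem integral_mul_inner_eq (hint : Integrable (fun x => Real.exp |⟪θ, x⟫|) μ)
    (hg : Measurable g) (hgC : ∀ x, |g x| ≤ C) (hg0 : ∫ x, g x ∂μ = 0)
    (h : ∀ s, ridgeIntegral μ θ Real.sigmoid g s = b * ridgeIntegral μ θ logisticDensity 1 s) :
    ∫ x, g x * ⟪θ, x⟫ ∂μ = b * μ.real univ := by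
  have hone (x : E) : |(1 : E → ℝ) x| ≤ 1 := by simp
  have hshift (s : ℝ) : ∫ x, g x * (⟪θ, x⟫ - s) ∂μ = ∫ x, g x * ⟪θ, x⟫ ∂μ := by
    have hgs : Integrable (fun x => g x * s) μ :=
      (Integrable.of_bound hg.aestronglyMeasurable C (.of_forall hgC)).mul_const s
    simp only [mul_sub]
    rw [integral_sub (by simpa using integrable_mul_inner_sub hint hg hgC 0) hgs,
      integral_mul_const, hg0, zero_mul, sub_zero]
  have hreflect (s : ℝ) : ridgeIntegral μ (-θ) softplus g s =
      b * (μ.real univ - ridgeIntegral μ (-θ) Real.sigmoid 1 s) - ∫ x, g x * ⟪θ, x⟫ ∂μ := by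
    have hS := ridgeIntegral_sigmoid_neg (μ := μ) (θ := θ) (s := -s) measurable_one hone
    have hP := ridgeIntegral_softplus_neg hint hg hgC (-s)
    rw [ridgeIntegral_softplus_eq hint hg hgC h, hshift, neg_neg] at hP
    simp only [neg_neg, Pi.one_apply, integral_const, smul_eq_mul, mul_one] at hS
    rw [hP, hS, sub_sub_cancel]
  have hint' : Integrable (fun x => Real.exp |⟪-θ, x⟫|) μ := by
    simpa only [inner_neg_left, abs_neg] using hint
  have hP := tendsto_ridgeIntegral_atTop (μ := μ) (θ := -θ) continuous_softplus
    monotone_softplus softplus_nonneg tendsto_softplus_atBot hg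
    (by simpa using integrable_mul_softplus hint' hg hgC 0)
  have hS := tendsto_ridgeIntegral_atTop (μ := μ) (θ := -θ) (by fun_prop) Real.sigmoid_monotone
    Real.sigmoid_nonneg Real.tendsto_sigmoid_atBot measurable_one
    (by simpa using
      integrable_mul_ridge (by fun_prop) abs_sigmoid_le_one measurable_one hone (-θ) 0)
  have hlim := tendsto_nhds_unique (hP.congr hreflect)
    (((hS.const_sub (μ.real univ)).const_mul b).sub_const _)
  rw [sub_zero] at hlim
  linarith

/-- If the ridge integrals of `g` satisfy the differential equation that makes
`ridgeIntegral μ θ sigmoid g` proportional to the derivative of `ridgeIntegral μ θ sigmoid 1`, the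
ratio is read off from both ends `s → ±∞`. -/
theorem integral_mul_exp_inner_mul_eq [μ.IsOpenPosMeasure]
    (hint : Integrable (fun x => Real.exp |⟪θ, x⟫|) μ) (hg : Measurable g)
    (hgC : ∀ x, |g x| ≤ C) (hg0 : ∫ x, g x ∂μ = 0)
    (h : ∀ s, ridgeIntegral μ θ Real.sigmoid g s * ridgeIntegral μ θ logisticDensityDeriv 1 s =
      ridgeIntegral μ θ logisticDensity g s * ridgeIntegral μ θ logisticDensity 1 s) :
    (∫ x, g x * Real.exp ⟪θ, x⟫ ∂μ) * μ.real univ =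
      (∫ x, g x * ⟪θ, x⟫ ∂μ) * ∫ x, Real.exp ⟪θ, x⟫ ∂μ := by
  have hone (x : E) : |(1 : E → ℝ) x| ≤ 1 := by simp
  have hderivN (s : ℝ) := hasDerivAt_ridgeIntegral (θ := θ) Real.hasDerivAt_sigmoid
    continuous_logisticDensity abs_logisticDensity_le_one hg hgC
    (integrable_mul_ridge (μ := μ) (by fun_prop) abs_sigmoid_le_one hg hgC θ s)
  have hderivR (s : ℝ) := hasDerivAt_ridgeIntegral (θ := θ) hasDerivAt_logisticDensity
    (by fun_prop) abs_logisticDensityDeriv_le_one measurable_one hone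
    (integrable_mul_ridge (μ := μ) (by fun_prop) abs_logisticDensity_le_one measurable_one hone θ s)
  obtain ⟨b, hb⟩ := exists_forall_eq_mul_of_deriv_mul_eq hderivN hderivR
    (fun s => (ridgeIntegral_one_pos (by fun_prop) logisticDensity_pos
      abs_logisticDensity_le_one).ne') fun s => by
        rw [mul_neg, neg_mul, h]
        rfl
  rw [integral_mul_exp_inner_eq hint hg hgC hb, integral_mul_inner_eq hint hg hgC hg0 hb]
  ring

end ProportionalRidges

section Laplace

variable {I : Type*} {ι : I → I} {E : Type*} [NormedAddCommGroup E] [InnerProductSpace ℝ E]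
  {p : I → E} {ω : I → ℝ} {i : I}

theorem smul_mem_normalCell_iff {c : ℝ} (hc : 0 < c) {x : E} :
    c • x ∈ normalCell p i ↔ x ∈ normalCell p i := by
  simp only [normalCell, mem_ofPred_eq, inner_smul_right, mul_lt_mul_iff_right₀ hc]

variable [Fintype I]

theorem cellFunction_smul {c : ℝ} (hc : 0 < c) (x : E) :
    cellFunction p ω (c • x) = cellFunction p ω x :=
  Finset.sum_congr rfl fun i _ => by
    by_cases h : x ∈ normalCell p i <;> simp [h, smul_mem_normalCell_iff hc]

theorem norm_pairing_eq_of_mem_normalCell [Nonempty I] (hι : ∀ i, p (ι i) = -p i) {x : E}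
    (hx : x ∈ normalCell p i) : ‖pairing p x‖ = ⟪p i, x⟫ := by
  obtain ⟨j, hj⟩ := exists_inner_eq_norm_pairing hι x
  obtain rfl : j = i := by
    by_contra hne
    exact ((hx j hne).trans_le (inner_le_norm_pairing p x i)).ne hj
  exact hj.symm

variable [FiniteDimensional ℝ E] [MeasurableSpace E] [BorelSpace E]

theorem integrable_limitMeasure_of_norm_le (hp : Submodule.span ℝ (range p) = ⊤) {G : Type*}
    [NormedAddCommGroup G] [NormedSpace ℝ G] [SecondCountableTopology G] [MeasurableSpace G]
    [BorelSpace G] {f : E → G} (hf : Measurable f) {C r : ℝ} (hr : r < 1)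
    (hle : ∀ x, ‖f x‖ ≤ C * Real.exp (r * ‖pairing p x‖)) : Integrable f (limitMeasure p) := by
  rw [limitMeasure, integrable_withDensity_iff_integrable_smul' (by fun_prop) (by simp)]
  have hT : Function.Injective ((1 - r) • pairing p) :=
    (smul_right_injective _ (sub_pos.2 hr).ne').comp (pairing_injective hp)
  refine ((integrable_exp_neg_norm hT).const_mul C).mono' (by fun_prop) (.of_forall fun x => ?_)
  rw [ENNReal.toReal_ofReal (Real.exp_pos _).le, norm_smul, Real.norm_of_nonneg (Real.exp_pos _).le,
    smul_apply, norm_smul, Real.norm_of_nonneg (sub_pos.2 hr).le]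
  refine (mul_le_mul_of_nonneg_left (hle x) (Real.exp_pos _).le).trans_eq ?_
  rw [mul_left_comm, ← Real.exp_add]
  ring_nf

theorem integrable_exp_abs_inner_limitMeasure (hp : Submodule.span ℝ (range p) = ⊤) {r : ℝ}
    (hr0 : 0 ≤ r) (hr : r < 1) (i : I) :
    Integrable (fun x => Real.exp |⟪r • p i, x⟫|) (limitMeasure p) := by
  refine integrable_limitMeasure_of_norm_le hp (by fun_prop) (C := 1) hr fun x => ?_
  rw [one_mul, Real.norm_of_nonneg (Real.exp_pos _).le, inner_smul_left, abs_mul,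
    RCLike.conj_to_real, abs_of_nonneg hr0]
  gcongr
  exact norm_le_pi_norm (pairing p x) i

theorem integrable_id_limitMeasure (hp : Submodule.span ℝ (range p) = ⊤) :
    Integrable (fun x => x) (limitMeasure p) := by
  obtain ⟨c, hc, hle⟩ := exists_mul_norm_le (pairing_injective hp)
  refine integrable_limitMeasure_of_norm_le hp measurable_id (C := 2 / c) one_half_lt_one
    fun x => ?_
  rw [div_mul_eq_mul_div, le_div_iff₀' hc]
  linarith [hle x, Real.add_one_le_exp (1 / 2 * ‖pairing p x‖)]

theorem integral_mul_exp_inner_limitMeasure {g : E → ℝ} (hg : ∀ c : ℝ, 0 < c → ∀ x, g (c • x) = g x)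
    {t : ℝ} (ht : 0 ≤ t) (i : I) :
    ∫ x, g x * Real.exp ⟪(t / (1 + t)) • p i, x⟫ ∂limitMeasure p =
      (1 + t) ^ Module.finrank ℝ E *
        ∫ x, g x * Real.exp (-(t * (‖pairing p x‖ - ⟪p i, x⟫))) ∂limitMeasure p := by
  have ht1 : 0 < 1 + t := by positivity
  have hscale := Measure.integral_comp_smul_of_nonneg (volume : Measure E) (fun x =>
    Real.exp (-‖pairing p x‖) * (g x * Real.exp ⟪(t / (1 + t)) • p i, x⟫)) (1 + t)
    (hR := ht1.le)
  rw [integral_limitMeasure, integral_limitMeasure, ← smul_eq_mul (_ ^ _),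
    ← inv_smul_eq_iff₀ (by positivity), ← hscale]
  congr with x
  have hexp : ⟪(t / (1 + t)) • p i, (1 + t) • x⟫ = t * ⟪p i, x⟫ := by
    rw [inner_smul_left, inner_smul_right, RCLike.conj_to_real]
    field_simp
  rw [hg _ ht1, hexp, map_smul, norm_smul, Real.norm_of_nonneg ht1.le, mul_left_comm,
    mul_left_comm _ (g x), ← Real.exp_add, ← Real.exp_add]
  ring_nf

theorem tendsto_integral_mul_exp_neg_gap [Nonempty I] (hp : Submodule.span ℝ (range p) = ⊤)
    (hι : ∀ i, p (ι i) = -p i) (hinj : Function.Injective p) {g : E → ℝ} (hg : Measurable g)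
    {C : ℝ} (hgC : ∀ x, |g x| ≤ C) (i : I) :
    Tendsto (fun t => ∫ x, g x * Real.exp (-(t * (‖pairing p x‖ - ⟪p i, x⟫))) ∂limitMeasure p)
      atTop (𝓝 (∫ x in normalCell p i, g x ∂limitMeasure p)) := by
  have := isFiniteMeasure_limitMeasure hp
  rw [← integral_indicator (isOpen_normalCell p i).measurableSet]
  refine tendsto_integral_filter_of_dominated_convergence (fun _ => C)
    (.of_forall fun t => by fun_prop) ?_ (integrable_const C) ?_
  · filter_upwards [eventually_ge_atTop 0] with t ht
    refine .of_forall fun x => ?_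
    rw [norm_mul, Real.norm_of_nonneg (Real.exp_pos _).le]
    exact (mul_le_of_le_one_right (norm_nonneg _) (Real.exp_le_one_iff.2 (neg_nonpos.2
      (mul_nonneg ht (sub_nonneg.2 (inner_le_norm_pairing p x i)))))).trans (hgC x)
  · filter_upwards [ae_limitMeasure_iff.2 (ae_exists_mem_normalCell hinj)] with x ⟨j, hj⟩
    by_cases hij : x ∈ normalCell p i
    · simp [hij, norm_pairing_eq_of_mem_normalCell hι hij]
    · have hlt : ⟪p i, x⟫ < ‖pairing p x‖ :=
        (hj i fun h => hij (h ▸ hj)).trans_le (inner_le_norm_pairing p x j)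
      simpa [hij] using (Real.tendsto_exp_neg_atTop_nhds_zero.comp
        (tendsto_id.atTop_mul_const (sub_pos.2 hlt))).const_mul (g x)

theorem setIntegral_normalCell_cellFunction (ω : I → ℝ) (i : I) :
    ∫ x in normalCell p i, cellFunction p ω x ∂limitMeasure p =
      ω i * (limitMeasure p).real (normalCell p i) := by
  rw [setIntegral_congr_fun (isOpen_normalCell p i).measurableSet fun x hx =>
    cellFunction_of_mem ω hx]
  simp [mul_comm]

theorem integral_cellFunction_eq_zero [Nonempty I] (hp : Submodule.span ℝ (range p) = ⊤)
    (hinv : Function.Involutive ι) (hι : ∀ i, p (ι i) = -p i) (hinj : Function.Injective p)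
    (hω : ∀ i, ω (ι i) = -ω i) : ∫ x, cellFunction p ω x ∂limitMeasure p = 0 :=
  tendsto_nhds_unique (tendsto_integral_softmaxMean hp hι hinj ω)
    (by simp only [integral_softmaxMean_eq_zero hinv hι hω, tendsto_const_nhds])

theorem integral_cellFunction_mul_exp_neg_gap_mul_eq [Nonempty I]
    (hp : Submodule.span ℝ (range p) = ⊤) (hinv : Function.Involutive ι)
    (hι : ∀ i, p (ι i) = -p i) (hinj : Function.Injective p) (hω : ∀ i, ω (ι i) = -ω i)
    (hcurv : Tendsto (fun β => ∫ x, lseCurvature β (pairing p x) ω ∂gibbsMeasure β p) atTop (𝓝 0))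
    (i : I) {t : ℝ} (ht : 0 ≤ t) :
    (∫ x, cellFunction p ω x * Real.exp (-(t * (‖pairing p x‖ - ⟪p i, x⟫))) ∂limitMeasure p) *
        (limitMeasure p).real univ =
      t / (1 + t) * (∫ x, cellFunction p ω x * ⟪p i, x⟫ ∂limitMeasure p) *
        ∫ x, Real.exp (-(t * (‖pairing p x‖ - ⟪p i, x⟫))) ∂limitMeasure p := by
  have := isFiniteMeasure_limitMeasure hp
  have := isOpenPosMeasure_limitMeasure (p := p)
  have hexp := integral_mul_exp_inner_mul_eq
    (integrable_exp_abs_inner_limitMeasure hp (r := t / (1 + t)) (by positivity)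
      ((div_lt_one (by positivity)).2 (by linarith)) i)
    (measurable_cellFunction p ω) (abs_cellFunction_le ω)
    (integral_cellFunction_eq_zero hp hinv hι hinj hω)
    fun s => ridgeIntegral_cellFunction_mul_eq hp hinv hι hinj hω hcurv _ s
  have hone := integral_mul_exp_inner_limitMeasure (p := p) (g := 1) (by simp) ht i
  have hfirst : ∫ x, cellFunction p ω x * ⟪(t / (1 + t)) • p i, x⟫ ∂limitMeasure p =
      t / (1 + t) * ∫ x, cellFunction p ω x * ⟪p i, x⟫ ∂limitMeasure p := by
    simp only [inner_smul_left, RCLike.conj_to_real, mul_left_comm _ (t / (1 + t)),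
      integral_const_mul]
  simp only [Pi.one_apply, one_mul] at hone
  rw [hone, hfirst, integral_mul_exp_inner_limitMeasure (fun _ hc _ => cellFunction_smul hc _) ht]
    at hexp
  exact mul_left_cancel₀ (show (1 + t) ^ Module.finrank ℝ E ≠ 0 by positivity)
    (by linear_combination hexp)

theorem tendsto_div_one_add_atTop : Tendsto (fun t : ℝ => t / (1 + t)) atTop (𝓝 1) := by
  have h : Tendsto (fun t : ℝ => 1 - (1 + t)⁻¹) atTop (𝓝 (1 - 0)) :=
    (tendsto_inv_atTop_zero.comp (tendsto_atTop_add_const_left _ 1 tendsto_id)).const_sub 1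
  rw [sub_zero] at h
  refine h.congr' ?_
  filter_upwards [eventually_ge_atTop 0] with t ht
  field_simp
  ring

theorem mul_measureReal_univ_eq_integral [Nonempty I] (hp : Submodule.span ℝ (range p) = ⊤)
    (hinv : Function.Involutive ι) (hι : ∀ i, p (ι i) = -p i) (hinj : Function.Injective p)
    (hvert : ∀ i, p i ∈ extremePoints ℝ (convexHull ℝ (range p))) (hω : ∀ i, ω (ι i) = -ω i)
    (hcurv : Tendsto (fun β => ∫ x, lseCurvature β (pairing p x) ω ∂gibbsMeasure β p) atTop (𝓝 0))
    (i : I) :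
    ω i * (limitMeasure p).real univ = ∫ x, cellFunction p ω x * ⟪p i, x⟫ ∂limitMeasure p := by
  have hleft := (tendsto_integral_mul_exp_neg_gap hp hι hinj (measurable_cellFunction p ω)
    (abs_cellFunction_le ω) i).mul_const ((limitMeasure p).real univ)
  have hright := (tendsto_div_one_add_atTop.mul_const
    (∫ x, cellFunction p ω x * ⟪p i, x⟫ ∂limitMeasure p)).mul
      (tendsto_integral_mul_exp_neg_gap hp hι hinj measurable_one (C := 1) (by simp) i)
  simp only [setIntegral_normalCell_cellFunction, Pi.one_apply, one_mul, setIntegral_const,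
    smul_eq_mul, mul_one] at hleft hright
  have hlim := tendsto_nhds_unique (hleft.congr' ((eventually_ge_atTop 0).mono fun t ht =>
    integral_cellFunction_mul_exp_neg_gap_mul_eq hp hinv hι hinj hω hcurv i ht)) hright
  exact mul_right_cancel₀ (limitMeasure_normalCell_pos hp hinj (hvert i)).ne'
    (by linear_combination hlim)

theorem exists_forall_eq_inner [Nonempty I] (hp : Submodule.span ℝ (range p) = ⊤)
    (hinv : Function.Involutive ι) (hι : ∀ i, p (ι i) = -p i) (hinj : Function.Injective p)
    (hvert : ∀ i, p i ∈ extremePoints ℝ (convexHull ℝ (range p))) (hω : ∀ i, ω (ι i) = -ω i)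
    (hcurv : Tendsto (fun β => ∫ x, lseCurvature β (pairing p x) ω ∂gibbsMeasure β p) atTop
      (𝓝 0)) : ∃ v : E, ∀ i, ω i = ⟪p i, v⟫ := by
  have := isFiniteMeasure_limitMeasure hp
  have := isOpenPosMeasure_limitMeasure (p := p)
  set m := (limitMeasure p).real univ
  have hm : m ≠ 0 := (measureReal_ne_zero_iff).2 (isOpen_univ.measure_ne_zero _ univ_nonempty)
  have hint : Integrable (fun x => cellFunction p ω x • x) (limitMeasure p) :=
    (integrable_id_limitMeasure hp).bdd_smul ‖ω‖
      (measurable_cellFunction p ω).aestronglyMeasurable (.of_forall (abs_cellFunction_le ω))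
  refine ⟨m⁻¹ • ∫ x, cellFunction p ω x • x ∂limitMeasure p, fun i => ?_⟩
  rw [inner_smul_right, ← integral_inner hint, ← div_eq_inv_mul, eq_div_iff hm,
    mul_measureReal_univ_eq_integral hp hinv hι hinj hvert hω hcurv]
  simp only [inner_smul_right]

end Laplace

section Congruence

variable {I : Type*} {ι : I → I} {E F : Type*} [NormedAddCommGroup E] [InnerProductSpace ℝ E]
  [NormedAddCommGroup F] [InnerProductSpace ℝ F] {p : I → E} {q : I → F}

theorem inner_le_inner_of_norm_sub_le {x y : E} {x' y' : F} (hx : ‖x'‖ = ‖x‖) (hy : ‖y'‖ = ‖y‖)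
    (h : ‖x' - y'‖ ≤ ‖x - y‖) : ⟪x, y⟫ ≤ ⟪x', y'⟫ := by
  have hsq := pow_le_pow_left₀ (norm_nonneg _) h 2
  rw [norm_sub_sq_real, norm_sub_sq_real, hx, hy] at hsq
  linarith

theorem norm_sub_eq_of_inner_eq {x y : E} {x' y' : F} (hx : ‖x'‖ = ‖x‖) (hy : ‖y'‖ = ‖y‖)
    (h : ⟪x', y'⟫ = ⟪x, y⟫) : ‖x' - y'‖ = ‖x - y‖ := by
  rw [← sq_eq_sq₀ (norm_nonneg _) (norm_nonneg _), norm_sub_sq_real, norm_sub_sq_real, hx, hy, h]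

/-- `⟪p i, y⟫ - ⟪T (p i), T y⟫` is linear in `y`, vanishes at `p i` and is nonpositive at the other
ends of the edges at `p i`, hence at all vertices. Central symmetry turns this into an equality. -/
theorem inner_map_eq_of_norm_sub_map_le [Fintype I] [FiniteDimensional ℝ E]
    (hι : ∀ i, p (ι i) = -p i) (hinj : Function.Injective p)
    (hvert : ∀ i, p i ∈ extremePoints ℝ (convexHull ℝ (range p))) {T : E →ₗ[ℝ] F}
    (hnorm : ∀ i, ‖T (p i)‖ = ‖p i‖)
    (hedge : ∀ i j, ¬HasTransversal p i j → ‖T (p i) - T (p j)‖ ≤ ‖p i - p j‖) (i k : I) :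
    ⟪T (p i), T (p k)⟫ = ⟪p i, p k⟫ := by
  let c : StrongDual ℝ E := innerSL ℝ (p i) - (innerSL ℝ (T (p i))).comp T.toContinuousLinearMap
  have hc (y : E) : c y = ⟪p i, y⟫ - ⟪T (p i), T y⟫ := rfl
  have hci : c (p i) = 0 := by
    rw [hc, real_inner_self_eq_norm_sq, real_inner_self_eq_norm_sq, hnorm, sub_self]
  have hle (k : I) : ⟪p i, p k⟫ ≤ ⟪T (p i), T (p k)⟫ := by
    refine sub_nonpos.1 ((apply_le_of_forall_not_hasTransversal hinj hvert c
      (fun j _ hj => ?_) k).trans_eq hci)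
    rw [hci, hc, sub_nonpos]
    exact inner_le_inner_of_norm_sub_le (hnorm i) (hnorm j) (hedge i j hj)
  refine le_antisymm ?_ (hle k)
  simpa [hι, inner_neg_right] using hle (ι k)

variable [Fintype I] [Nonempty I] [FiniteDimensional ℝ E] [MeasurableSpace E] [BorelSpace E]

theorem exists_linearMap_apply_eq [FiniteDimensional ℝ F] (hp : Submodule.span ℝ (range p) = ⊤)
    (hinv : Function.Involutive ι) (hι : ∀ i, p (ι i) = -p i) (hinj : Function.Injective p)
    (hvert : ∀ i, p i ∈ extremePoints ℝ (convexHull ℝ (range p))) (hqι : ∀ i, q (ι i) = -q i)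
    (hedge : ∀ i j, ¬HasTransversal p i j → ‖q i - q j‖ ≤ ‖p i - p j‖)
    (hnorm : ∀ i, ‖q i‖ = ‖p i‖) : ∃ T : E →ₗ[ℝ] F, ∀ i, T (p i) = q i := by
  let b := stdOrthonormalBasis ℝ F
  choose v hv using fun k => exists_forall_eq_inner (ω := fun i => ⟪b k, q i⟫) hp hinv hι hinj
    hvert (by simp [hqι]) (tendsto_integral_lseCurvature_inner hp hinv hι hinj hvert hqι hedge
      hnorm b k)
  refine ⟨∑ k, (innerₛₗ ℝ (v k)).smulRight (b k), fun i => ?_⟩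
  rw [← b.sum_repr' (q i)]
  simp [hv, real_inner_comm]

theorem congruent_of_span_eq_top [FiniteDimensional ℝ F] (hp : Submodule.span ℝ (range p) = ⊤)
    (hinv : Function.Involutive ι) (hι : ∀ i, p (ι i) = -p i) (hinj : Function.Injective p)
    (hvert : ∀ i, p i ∈ extremePoints ℝ (convexHull ℝ (range p))) (hqι : ∀ i, q (ι i) = -q i)
    (hedge : ∀ i j, ¬HasTransversal p i j → ‖q i - q j‖ ≤ ‖p i - p j‖)
    (hnorm : ∀ i, ‖p i‖ ≤ ‖q i‖) :
    (∀ i j, ‖q i - q j‖ = ‖p i - p j‖) ∧ ∀ i, ‖q i‖ = ‖p i‖ := by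
  have heq := norm_eq_of_norm_le hp hinv hι hinj hvert hqι hedge hnorm
  obtain ⟨T, hT⟩ := exists_linearMap_apply_eq hp hinv hι hinj hvert hqι hedge heq
  refine ⟨fun i j => norm_sub_eq_of_inner_eq (heq i) (heq j) ?_, heq⟩
  simp only [← hT] at heq hedge ⊢
  exact inner_map_eq_of_norm_sub_map_le hι hinj hvert heq hedge i j

end Congruence

section Restriction

variable {E F : Type*} [AddCommGroup E] [Module ℝ E] [AddCommGroup F] [Module ℝ F]
  {f : E →ₗ[ℝ] F} {A B : Set E}

theorem isExtreme_image_iff (hf : Function.Injective f) :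
    IsExtreme ℝ (f '' A) (f '' B) ↔ IsExtreme ℝ A B := by
  have hseg (x y : E) : openSegment ℝ (f x) (f y) = f '' openSegment ℝ x y :=
    (image_openSegment ℝ f.toAffineMap x y).symm
  simp only [isExtreme_iff, image_subset_image_iff hf, forall_mem_image, hseg, hf.mem_set_image]

theorem map_mem_extremePoints_image_iff (hf : Function.Injective f) {x : E} :
    f x ∈ extremePoints ℝ (f '' A) ↔ x ∈ extremePoints ℝ A := by
  rw [← isExtreme_singleton, ← isExtreme_singleton, ← image_singleton, isExtreme_image_iff hf]

end Restriction

end PolytopeRigidity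

open PolytopeRigidity in
theorem centrally_symmetric_version_general {I E F : Type*} [Finite I]
    [NormedAddCommGroup E] [InnerProductSpace ℝ E] [NormedAddCommGroup F] [InnerProductSpace ℝ F]
    (p : I → E) (hinj : Function.Injective p)
    (hvert : ∀ i, p i ∈ extremePoints ℝ (convexHull ℝ (range p)))
    (ι : I → I) (hpsym : ∀ i, p (ι i) = -p i) (q : I → F) (hqsym : ∀ i, q (ι i) = -q i)
    (h1 : ∀ i j, i ≠ j → IsExtreme ℝ (convexHull ℝ (range p)) (segment ℝ (p i) (p j)) →
      ‖q i - q j‖ ≤ ‖p i - p j‖)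
    (h2 : ∀ i, ‖p i‖ ≤ ‖q i‖) :
    (∀ i j, ‖q i - q j‖ = ‖p i - p j‖) ∧ (∀ i, ‖q i‖ = ‖p i‖) := by
  have := Fintype.ofFinite I
  rcases isEmpty_or_nonempty I with _ | _
  · exact ⟨isEmptyElim, isEmptyElim⟩
  let S := Submodule.span ℝ (range p)
  let p' : I → S := fun i => ⟨p i, Submodule.subset_span (mem_range_self i)⟩
  let q' : I → Submodule.span ℝ (range q) := fun i =>
    ⟨q i, Submodule.subset_span (mem_range_self i)⟩
  have := FiniteDimensional.span_of_finite ℝ (finite_range p)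
  have := FiniteDimensional.span_of_finite ℝ (finite_range q)
  borelize ↥S
  have hspan : Submodule.span ℝ (range p') = ⊤ := by
    convert! Submodule.span_span_coe_preimage (R := ℝ) (s := range p)
    ext x
    simp [p', Subtype.ext_iff]
  have hhull : convexHull ℝ (range p) = S.subtype '' convexHull ℝ (range p') := by
    rw [S.subtype.image_convexHull, ← range_comp]
    rfl
  have hsegment (i j : I) : segment ℝ (p i) (p j) = S.subtype '' segment ℝ (p' i) (p' j) :=
    (image_segment ℝ S.subtype.toAffineMap (p' i) (p' j)).symm
  have hedge (i j : I) (hij : ¬HasTransversal p' i j) : ‖q' i - q' j‖ ≤ ‖p' i - p' j‖ := by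
    rcases eq_or_ne i j with rfl | hne
    · simp
    · refine h1 i j hne ?_
      rw [hhull, hsegment, isExtreme_image_iff S.injective_subtype]
      exact not_imp_comm.1 hasTransversal_of_not_isExtreme hij
  exact congruent_of_span_eq_top (p := p') (q := q') hspan
    (fun i => hinj (by simp [hpsym])) (fun i => Subtype.ext (hpsym i))
    (fun i j h => hinj (congrArg Subtype.val h))
    (fun i => (map_mem_extremePoints_image_iff S.injective_subtype).1 (hhull ▸ hvert i))
    (fun i => Subtype.ext (hqsym i)) hedge h2

theorem centrally_symmetric_version {n d e : ℕ}
    (p : Fin n → EuclideanSpace ℝ (Fin d)) (hinj : Function.Injective p)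
    (hvert : ∀ i, p i ∈ Set.extremePoints ℝ (convexHull ℝ (Set.range p)))
    (ι : Fin n → Fin n) (hι : Function.Involutive ι)
    (hpsym : ∀ i, p (ι i) = -p i)
    (q : Fin n → EuclideanSpace ℝ (Fin e))
    (hqsym : ∀ i, q (ι i) = -q i)
    (h1 : ∀ i j, IsEdge p i j → ‖q i - q j‖ ≤ ‖p i - p j‖)
    (h2 : ∀ i, ‖p i‖ ≤ ‖q i‖) :
    (∀ i j, ‖q i - q j‖ = ‖p i - p j‖) ∧ (∀ i, ‖q i‖ = ‖p i‖) :=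
  centrally_symmetric_version_general p hinj hvert ι hpsym q hqsym
    (fun i j hij hext => h1 i j ⟨hij, hext⟩) h2
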